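/- arXiv:1709.06608 — 4 statements merged into one kernel-verified Lean document; each statement's English description precedes it below -/
import Mathlib

section
/- (Generalized Pauli theorem, odd case) Let n = p + q be odd. Suppose γ₁,…,γ_n and β₁,…,β_n are two families of elements of Cl_{p,q} satisfying γ_a γ_b + γ_b γ_a = 2η_{ab}·e and β_a β_b + β_b β_a = 2η_{ab}·e for all a, b ∈ {1,…,n}, where η = diag(1,…,1,−1,…,−1) (p pluses, q minuses), and assume additionally that β₁β₂⋯β_n = γ₁γ₂⋯γ_n. Then there exists an invertible element T ∈ Cl_{p,q} such that γ_a = T^{−1} β_a T for all a = 1,…,n; moreover T is unique up to multiplication by an invertible element of the center of Cl_{p,q}. -/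
open CliffordAlgebra

/-- The quadratic form of signature `(p, q)` on `ℝ^(p+q)`:
`Q(x) = x₁² + ⋯ + x_p² − x_{p+1}² − ⋯ − x_{p+q}²`. -/
noncomputable def Qpq (p q : ℕ) : QuadraticForm ℝ (Fin (p + q) → ℝ) :=
  QuadraticMap.weightedSumSquares ℝ (fun i : Fin (p + q) => if (i : ℕ) < p then (1 : ℝ) else -1)

/-- The real Clifford algebra `Cl_{p,q}`. -/
noncomputable abbrev Cl (p q : ℕ) : Type := CliffordAlgebra (Qpq p q)

/-- The generators `e_a` of `Cl_{p,q}`. -/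
noncomputable def gen (p q : ℕ) (i : Fin (p + q)) : Cl p q :=
  ι (Qpq p q) (Pi.single i 1)

/-- The basis element `e_A` of `Cl_{p,q}` attached to an ordered multi-index `A`:
the product of the generators with indices in `A`, in increasing order (`e_∅ = 1`). -/
noncomputable def basisEl (p q : ℕ) (A : Finset (Fin (p + q))) : Cl p q :=
  ((A.sort (· ≤ ·)).map (gen p q)).prod


/-- The diagonal matrix `η = diag(1,…,1,−1,…,−1)` with `p` pluses and `q` minuses. -/
def etaPQ (p q : ℕ) (a b : Fin (p + q)) : ℝ :=
  if a = b then (if (a : ℕ) < p then 1 else -1) else 0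

/-!
The maps `T ↦ (w i)⁻¹ • (x i * T * y i)`, for two Clifford families `x` and `y` of even length `m`,
are commuting involutions of the algebra. Their joint `+1` eigenspace `I(x, y)` consists of the
intertwiners, and multiplication by products of the twisted generators carries it isomorphically
onto each of the other `2 ^ m - 1` joint eigenspaces. In an algebra of dimension at most
`2 ^ (m + 1)` the centralizer `I(x, x)` therefore has dimension at most two, so it is commutative,
and since it generates the algebra together with `x`, it is the center `C`.

Over `C`, the product `I(x, y) * I(y, x)` lies in `I(x, x) = C` and generates the whole algebra, so
it equals `C` by Nakayama's lemma. Hence `I(x, y)` is an invertible `C`-module; as `C` is Artinian,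
it is generated by one unit, which is the desired intertwiner.

For odd length this applies to the families without their first members. Commutation with those
tails already forces centrality, so the volume element is central, and equality of the two volume
elements shows that the intertwiner of the tails also matches the first members.
-/

section Algebras

variable {R A : Type*}

lemma mul_list_prod_of_forall_mul_eq_smul [CommSemiring R] [Semiring A] [Algebra R A]
    {ι : Type*} {a : A} {c : ι → R} {x : ι → A} (l : List ι)
    (h : ∀ i ∈ l, a * x i = c i • (x i * a)) :
    a * (l.map x).prod = (l.map c).prod • ((l.map x).prod * a) := by
  induction l with
  | nil => simp
  | cons i l ih =>
    have hi : a * x i = c i • (x i * a) := h i (by simp)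
    have hl := ih fun j hj => h j (List.mem_cons_of_mem i hj)
    simp only [List.map_cons, List.prod_cons]
    rw [← mul_assoc, hi, smul_mul_assoc, mul_assoc, hl, mul_smul_comm, smul_smul, mul_assoc]

lemma list_prod_mul_of_forall_mul_eq_mul [Monoid A] {ι : Type*} {x y : ι → A} {T : A}
    (l : List ι) (h : ∀ i ∈ l, x i * T = T * y i) :
    (l.map x).prod * T = T * (l.map y).prod := by
  induction l with
  | nil => simp
  | cons i l ih =>
    simp only [List.map_cons, List.prod_cons]
    rw [mul_assoc, ih fun j hj => h j (List.mem_cons_of_mem i hj), ← mul_assoc,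
      h i (List.mem_cons_self), mul_assoc]

lemma commute_of_finrank_le_two {K B : Type*} [Field K] [Ring B] [Algebra K B]
    [Module.Finite K B] (h : Module.finrank K B ≤ 2) (a b : B) : Commute a b := by
  rcases subsingleton_or_nontrivial B with _ | _
  · exact Subsingleton.elim _ _
  have hquot : Module.finrank K (B ⧸ Submodule.span K {(1 : B)}) ≤ 1 := by
    have hadd := (Submodule.span K {(1 : B)}).finrank_quotient_add_finrank
    rw [finrank_span_singleton one_ne_zero] at hadd
    lia
  obtain ⟨v, hv⟩ := finrank_le_one_iff.mp hquot
  obtain ⟨g, rfl⟩ := Submodule.mkQ_surjective _ v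
  have eq_affine (b : B) : ∃ c r : K, b = c • g + algebraMap K B r := by
    obtain ⟨c, hc⟩ := hv (Submodule.Quotient.mk b)
    rw [Submodule.mkQ_apply, ← Submodule.Quotient.mk_smul, eq_comm, Submodule.Quotient.eq,
      Submodule.mem_span_singleton] at hc
    obtain ⟨r, hr⟩ := hc
    exact ⟨c, r, by rw [Algebra.algebraMap_eq_smul_one, hr]; abel⟩
  obtain ⟨c, r, rfl⟩ := eq_affine a
  obtain ⟨c', r', rfl⟩ := eq_affine b
  have hg : Commute g (c' • g + algebraMap K B r') :=
    ((Commute.refl g).smul_right c').add_right (Algebra.commutes r' g).symm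
  exact (hg.smul_left c).add_left (Algebra.commutes r _)

variable [CommRing R] [Ring A] [Algebra R A]

lemma eq_one_of_top_mul_eq_top [Module.Finite R A] [FaithfulSMul R A] {M : Submodule R A}
    (hM : M ≤ 1) (htop : ⊤ * M = ⊤) : M = 1 := by
  let J : Ideal R := M.comap (Algebra.linearMap R A)
  have hJ : (⊤ : Submodule R A) ≤ J • ⊤ := by
    refine htop.symm.trans_le (Submodule.mul_le.mpr ?_)
    rintro a - t ht
    obtain ⟨r, rfl⟩ := Submodule.mem_one.mp (hM ht)
    rw [← Algebra.commutes, ← Algebra.smul_def]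
    exact Submodule.smul_mem_smul ht Submodule.mem_top
  obtain ⟨r, hr, hr0⟩ :=
    Submodule.exists_sub_one_mem_and_smul_eq_zero_of_fg_of_le_smul J ⊤ Module.Finite.fg_top hJ
  have hr_zero : r = 0 := FaithfulSMul.eq_of_smul_eq_smul (α := A) fun a => by
    rw [hr0 a Submodule.mem_top, zero_smul]
  have hone : (1 : A) ∈ M := by simpa [J, hr_zero] using hr
  exact le_antisymm hM (Submodule.one_le.mpr hone)

lemma exists_unit_mem_of_mul_eq_one [IsArtinianRing R] [FaithfulSMul R A] {M N : Submodule R A}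
    (hMN : M * N = 1) (hNM : N * M = 1) : ∃ u : Aˣ, (u : A) ∈ M := by
  let I : (Submodule R A)ˣ := ⟨M, N, hMN, hNM⟩
  -- The Picard group of an Artinian ring is trivial.
  have hI : I ∈ (Submodule.unitsToPic R A).ker := Subsingleton.elim _ _
  rw [Submodule.ker_unitsToPic] at hI
  obtain ⟨u, hu⟩ := hI
  refine ⟨u, ?_⟩
  have hM : M = Submodule.span R {(u : A)} := by simpa [I] using congrArg Units.val hu.symm
  exact hM ▸ Submodule.mem_span_singleton_self _

end Algebras

/-- A family `x` in an `R`-algebra satisfying the defining relations of the Clifford algebra of the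
diagonal form with weights `w`: the `x i` anticommute pairwise and `x i` has square `w i`. The
relations are the polarized ones, which determine the squares only if `2` is cancellable. -/
def IsCliffordFamily {ι R A : Type*} [DecidableEq ι] [CommRing R] [Ring A] [Algebra R A]
    (w : ι → R) (x : ι → A) : Prop :=
  ∀ i j, x i * x j + x j * x i = (2 * if i = j then w i else 0) • (1 : A)

/-- The volume element `x₁ ⋯ xₙ` of a finite family, as a product in increasing order. -/
def volumeElement {A : Type*} [Monoid A] {n : ℕ} (x : Fin n → A) : A :=
  ((List.finRange n).map x).prod

/-- The twisted generator `xᵢ ω`, where `ω` is the volume element. In an even Clifford family it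
anticommutes with `xᵢ` and commutes with the other generators. -/
def twist {A : Type*} [Monoid A] {n : ℕ} (x : Fin n → A) (i : Fin n) : A :=
  x i * volumeElement x

/-- The module of elements `T` intertwining two families on the index set `S`, that is with
`x i * T = T * y i` for `i ∈ S`. -/
def intertwiners {ι A : Type*} (R : Type*) [CommRing R] [Ring A] [Algebra R A] (x y : ι → A)
    (S : Finset ι) : Submodule R A where
  carrier := {T | ∀ i ∈ S, x i * T = T * y i}
  zero_mem' := by simp
  add_mem' ha hb i hi := by rw [mul_add, add_mul, ha i hi, hb i hi]
  smul_mem' c T hT i hi := by rw [mul_smul_comm, smul_mul_assoc, hT i hi]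

lemma intertwiners_empty {ι R A : Type*} [CommRing R] [Ring A] [Algebra R A] (x y : ι → A) :
    intertwiners R x y ∅ = ⊤ :=
  eq_top_iff.mpr fun _ _ i hi => absurd hi (Finset.notMem_empty i)

section Volume

variable {A : Type*} [Monoid A] {n : ℕ}

lemma volumeElement_succ (x : Fin (n + 1) → A) :
    volumeElement x = x 0 * volumeElement (x ∘ Fin.succ) := by
  simp [volumeElement, List.finRange_succ]

lemma volumeElement_mul_of_forall_mul_eq_mul {x y : Fin n → A} {T : A}
    (h : ∀ i, x i * T = T * y i) : volumeElement x * T = T * volumeElement y :=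
  list_prod_mul_of_forall_mul_eq_mul _ fun i _ => h i

lemma isUnit_volumeElement {x : Fin n → A} (h : ∀ i, IsUnit (x i)) : IsUnit (volumeElement x) :=
  List.prod_isUnit (by simpa using h)

end Volume

namespace IsCliffordFamily

section

variable {ι R A : Type*} [DecidableEq ι] [CommRing R] [Ring A] [Algebra R A]
  {w : ι → R} {x : ι → A}

lemma mul_eq_neg_of_ne (hx : IsCliffordFamily w x) {i j : ι} (hij : i ≠ j) :
    x i * x j = -(x j * x i) :=
  eq_neg_of_add_eq_zero_left (by simpa [hij] using hx i j)

lemma mul_self (hx : IsCliffordFamily w x) (h2 : IsUnit (2 : R)) (i : ι) :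
    x i * x i = w i • (1 : A) := by
  apply h2.smul_left_cancel.mp
  rw [two_smul, hx i i, if_pos rfl, mul_smul]

lemma isUnit (hx : IsCliffordFamily w x) (h2 : IsUnit (2 : R)) {i : ι} (hw : IsUnit (w i)) :
    IsUnit (x i) := by
  have hsq : IsUnit (x i * x i) := by
    rw [hx.mul_self h2, ← Algebra.algebraMap_eq_smul_one]
    exact hw.map _
  exact ((Commute.refl (x i)).isUnit_mul_iff.mp hsq).1

lemma comp_injective {κ : Type*} [DecidableEq κ] (hx : IsCliffordFamily w x) {f : κ → ι}
    (hf : f.Injective) : IsCliffordFamily (w ∘ f) (x ∘ f) := fun i j => by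
  simpa [hf.eq_iff] using hx (f i) (f j)

lemma algebraMap_comp {S : Type*} [CommRing S] [Algebra R S] [Algebra S A] [IsScalarTower R S A]
    (hx : IsCliffordFamily w x) : IsCliffordFamily (algebraMap R S ∘ w) x := fun i j => by
  rw [hx i j, ← algebraMap_smul S]
  simp [apply_ite (algebraMap R S), map_ofNat]

end

section

variable {R A : Type*} [CommRing R] [Ring A] [Algebra R A] {n : ℕ} {w : Fin n → R} {x : Fin n → A}

lemma mul_volumeElement (hx : IsCliffordFamily w x) (i : Fin n) :
    x i * volumeElement x = (-1 : R) ^ (n - 1) • (volumeElement x * x i) := by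
  let c (j : Fin n) : R := if j = i then 1 else -1
  have hc : ((List.finRange n).map c).prod = (-1) ^ (n - 1) := by
    rw [← Fin.prod_univ_def, ← Finset.mul_prod_erase _ _ (Finset.mem_univ i)]
    rw [Finset.prod_congr rfl fun j hj => if_neg (Finset.ne_of_mem_erase hj)]
    simp [c]
  rw [← hc]
  refine mul_list_prod_of_forall_mul_eq_smul _ fun j _ => ?_
  by_cases hij : j = i
  · simp [c, hij]
  · simpa [c, hij] using hx.mul_eq_neg_of_ne (Ne.symm hij)

lemma commute_volumeElement (hx : IsCliffordFamily w x) (hn : Odd n) (i : Fin n) :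
    Commute (x i) (volumeElement x) := by
  simpa [commute_iff_eq, (Nat.Odd.sub_odd hn odd_one).neg_one_pow] using hx.mul_volumeElement i

lemma volumeElement_mul (hx : IsCliffordFamily w x) (hn : Even n) (i : Fin n) :
    volumeElement x * x i = -(x i * volumeElement x) := by
  have hodd : Odd (n - 1) := Nat.Even.sub_odd i.pos hn odd_one
  rw [hx.mul_volumeElement i, hodd.neg_one_pow, neg_one_smul, neg_neg]

end

section Even

variable {R A : Type*} [CommRing R] [Ring A] [Algebra R A] {m : ℕ} {w : Fin m → R} {x y : Fin m → A}

lemma mul_twist (hx : IsCliffordFamily w x) (hm : Even m) (i : Fin m) :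
    x i * twist x i = -(twist x i * x i) := by
  rw [twist, mul_assoc (x i) (volumeElement x), hx.volumeElement_mul hm, mul_neg, neg_neg]

lemma commute_twist (hx : IsCliffordFamily w x) (hm : Even m) {i j : Fin m} (hij : i ≠ j) :
    Commute (x j) (twist x i) := by
  rw [commute_iff_eq, twist, ← mul_assoc, hx.mul_eq_neg_of_ne hij.symm, mul_assoc,
    hx.volumeElement_mul hm, neg_mul, mul_neg, mul_assoc]

lemma isUnit_twist (hx : IsCliffordFamily w x) (h2 : IsUnit (2 : R)) (hw : ∀ i, IsUnit (w i))
    (i : Fin m) : IsUnit (twist x i) :=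
  (hx.isUnit h2 (hw i)).mul (isUnit_volumeElement fun j => hx.isUnit h2 (hw j))

lemma mul_twist_mul (hx : IsCliffordFamily w x) (hm : Even m) {S : Finset (Fin m)} {i : Fin m}
    {b : A} (hb : b ∈ intertwiners R x y (insert i S)) :
    x i * (twist x i * b) = -(twist x i * b * y i) := by
  rw [← mul_assoc, hx.mul_twist hm, neg_mul, mul_assoc, hb i (Finset.mem_insert_self i S),
    mul_assoc]

lemma twist_mul_mem_intertwiners (hx : IsCliffordFamily w x) (hm : Even m) {S : Finset (Fin m)}
    {i : Fin m} (hi : i ∉ S) {b : A} (hb : b ∈ intertwiners R x y (insert i S)) :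
    twist x i * b ∈ intertwiners R x y S := fun j hj => by
  have hij : i ≠ j := (ne_of_mem_of_not_mem hj hi).symm
  rw [← mul_assoc, (hx.commute_twist hm hij).eq, mul_assoc, hb j (Finset.mem_insert_of_mem hj),
    mul_assoc]

lemma exists_eq_twist_mul (hx : IsCliffordFamily w x) (h2 : IsUnit (2 : R))
    (hw : ∀ i, IsUnit (w i)) (hm : Even m) {S : Finset (Fin m)} {i : Fin m} (hi : i ∉ S) {c : A}
    (hc : c ∈ intertwiners R x y S) (hic : x i * c = -(c * y i)) :
    ∃ b ∈ intertwiners R x y (insert i S), c = twist x i * b := by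
  obtain ⟨v, hv⟩ := hx.isUnit_twist h2 hw i
  have hxv : x i * ↑v⁻¹ = -(↑v⁻¹ * x i) := by
    have h := hx.mul_twist hm i
    rw [← hv] at h
    rw [← v.mul_right_inj, ← v.mul_left_inj]
    simp [mul_assoc, h]
  refine ⟨↑v⁻¹ * c, ?_, by rw [← hv, v.mul_inv_cancel_left]⟩
  intro j hj
  rcases Finset.mem_insert.mp hj with rfl | hjS
  · rw [← mul_assoc, hxv, neg_mul, mul_assoc, hic, mul_neg, neg_neg, mul_assoc]
  · have hij : i ≠ j := (ne_of_mem_of_not_mem hjS hi).symm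
    have hcomm : Commute (x j) ↑v⁻¹ := (hv ▸ hx.commute_twist hm hij).units_inv_right
    rw [← mul_assoc, hcomm.eq, mul_assoc, hc j hjS, mul_assoc]

lemma mul_mul_mem_intertwiners (hx : IsCliffordFamily w x) (hy : IsCliffordFamily w y)
    {S : Finset (Fin m)} {i : Fin m} (hi : i ∉ S) {T : A} (hT : T ∈ intertwiners R x y S) :
    x i * T * y i ∈ intertwiners R x y S := fun j hj => by
  have hij : i ≠ j := (ne_of_mem_of_not_mem hj hi).symm
  calc x j * (x i * T * y i) = x j * x i * T * y i := by simp only [mul_assoc]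
    _ = -(x i * (x j * T) * y i) := by
      rw [hx.mul_eq_neg_of_ne hij.symm]
      simp only [neg_mul, mul_assoc]
    _ = x i * T * -(y j * y i) := by simp only [hT j hj, mul_neg, mul_assoc]
    _ = x i * T * y i * y j := by rw [← hy.mul_eq_neg_of_ne hij, ← mul_assoc]

/-- `T ↦ (w i)⁻¹ • (x i * T * y i)` is an involution of the intertwiners on `S`, and its `±1`
eigenspaces are the two summands. -/
lemma sup_map_twist_eq_intertwiners (hx : IsCliffordFamily w x) (hy : IsCliffordFamily w y)
    (h2 : IsUnit (2 : R)) (hw : ∀ i, IsUnit (w i)) (hm : Even m) {S : Finset (Fin m)} {i : Fin m}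
    (hi : i ∉ S) :
    intertwiners R x y (insert i S) ⊔
      (intertwiners R x y (insert i S)).map (LinearMap.mulLeft R (twist x i)) =
      intertwiners R x y S := by
  apply le_antisymm
  · refine sup_le (fun T hT j hj => hT j (Finset.mem_insert_of_mem hj)) ?_
    rintro - ⟨b, hb, rfl⟩
    exact hx.twist_mul_mem_intertwiners hm hi hb
  intro T hT
  have hxx := hx.mul_self h2 i
  have hyy := hy.mul_self h2 i
  have hTi := hx.mul_mul_mem_intertwiners hy hi hT
  have hwT := (intertwiners R x y S).smul_mem (w i) hT
  have hplus : w i • T + x i * T * y i ∈ intertwiners R x y (insert i S) := by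
    intro j hj
    rcases Finset.mem_insert.mp hj with rfl | hjS
    · simp only [mul_add, add_mul, mul_assoc, hyy]
      simp only [← mul_assoc, hxx, smul_mul_assoc, one_mul, mul_smul_comm, mul_one]
      exact add_comm _ _
    · exact add_mem hwT hTi j hjS
  have hminus : x i * (w i • T - x i * T * y i) = -((w i • T - x i * T * y i) * y i) := by
    simp only [mul_sub, sub_mul, mul_assoc, hyy]
    simp only [← mul_assoc, hxx, smul_mul_assoc, one_mul, mul_smul_comm, mul_one, neg_sub]
  obtain ⟨b, hb, hbT⟩ := hx.exists_eq_twist_mul h2 hw hm hi (sub_mem hwT hTi) hminus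
  rw [← Submodule.smul_mem_iff_of_isUnit _ (h2.mul (hw i))]
  have hsum : (2 * w i) • T = (w i • T + x i * T * y i) + twist x i * b := by
    rw [← hbT, mul_smul, two_smul]
    abel
  rw [hsum]
  exact Submodule.add_mem_sup hplus (Submodule.mem_map_of_mem hb)

lemma disjoint_map_twist (hx : IsCliffordFamily w x) (hy : IsCliffordFamily w y)
    (h2 : IsUnit (2 : R)) (hw : ∀ i, IsUnit (w i)) (hm : Even m) (S : Finset (Fin m)) (i : Fin m) :
    Disjoint (intertwiners R x y (insert i S))
      ((intertwiners R x y (insert i S)).map (LinearMap.mulLeft R (twist x i))) := by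
  rw [Submodule.disjoint_def]
  rintro - ha ⟨b, hb, rfl⟩
  rw [LinearMap.mulLeft_apply] at ha ⊢
  have hneg : twist x i * b * y i = -(twist x i * b * y i) :=
    (ha i (Finset.mem_insert_self i S)).symm.trans (hx.mul_twist_mul hm hb)
  have hzero : (2 : R) • (twist x i * b * y i) = 0 := by
    rw [two_smul, ← eq_neg_iff_add_eq_zero]
    exact hneg
  rwa [h2.smul_eq_zero, (hy.isUnit h2 (hw i)).mul_left_eq_zero] at hzero

lemma adjoin_mul_intertwiners_eq_top (hx : IsCliffordFamily w x) (hy : IsCliffordFamily w y)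
    (h2 : IsUnit (2 : R)) (hw : ∀ i, IsUnit (w i)) (hm : Even m) (S : Finset (Fin m)) :
    (Algebra.adjoin R (Set.range x)).toSubmodule * intertwiners R x y S = ⊤ := by
  set D := Algebra.adjoin R (Set.range x)
  have mem_D (i : Fin m) : x i ∈ D := Algebra.subset_adjoin (Set.mem_range_self i)
  have le_D_mul (M : Submodule R A) : M ≤ D.toSubmodule * M := by
    simpa using mul_le_mul' (Submodule.one_le.mpr D.one_mem) (le_refl M)
  induction S using Finset.induction_on with
  | empty =>
    rw [intertwiners_empty, eq_top_iff]
    exact le_D_mul ⊤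
  | insert i S hi ih =>
    have htwist : twist x i ∈ D :=
      mul_mem (mem_D i) (list_prod_mem (by simpa using mem_D))
    have hstep : intertwiners R x y S ≤ D.toSubmodule * intertwiners R x y (insert i S) := by
      rw [← hx.sup_map_twist_eq_intertwiners hy h2 hw hm hi, sup_le_iff]
      refine ⟨le_D_mul _, ?_⟩
      rintro - ⟨b, hb, rfl⟩
      exact Submodule.mul_mem_mul htwist hb
    have hmul : D.toSubmodule * intertwiners R x y S ≤
        D.toSubmodule * (D.toSubmodule * intertwiners R x y (insert i S)) :=
      mul_le_mul' le_rfl hstep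
    rwa [ih, ← mul_assoc, D.isIdempotentElem_toSubmodule.eq, top_le_iff] at hmul

lemma top_mul_intertwiners_eq_top (hx : IsCliffordFamily w x) (hy : IsCliffordFamily w y)
    (h2 : IsUnit (2 : R)) (hw : ∀ i, IsUnit (w i)) (hm : Even m) :
    ⊤ * intertwiners R x y Finset.univ = ⊤ :=
  top_le_iff.mp <| (hx.adjoin_mul_intertwiners_eq_top hy h2 hw hm Finset.univ).ge.trans <|
    mul_le_mul' le_top le_rfl

lemma intertwiners_mul_eq_one [Module.Finite R A] [FaithfulSMul R A]
    (hx : IsCliffordFamily w x) (hy : IsCliffordFamily w y) (h2 : IsUnit (2 : R))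
    (hw : ∀ i, IsUnit (w i)) (hm : Even m) (hbot : Subalgebra.centralizer R (Set.range x) = ⊥) :
    intertwiners R x y Finset.univ * intertwiners R y x Finset.univ = 1 := by
  apply eq_one_of_top_mul_eq_top
  · rw [Submodule.mul_le]
    intro T hT T' hT'
    rw [← Algebra.toSubmodule_bot, ← hbot, Subalgebra.mem_toSubmodule,
      Subalgebra.mem_centralizer_iff]
    rintro - ⟨i, rfl⟩
    rw [← mul_assoc, hT i (Finset.mem_univ i), mul_assoc, hT' i (Finset.mem_univ i), mul_assoc]
  · rw [← mul_assoc, hx.top_mul_intertwiners_eq_top hy h2 hw hm,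
      hy.top_mul_intertwiners_eq_top hx h2 hw hm]

lemma exists_unit_intertwiner_of_centralizer_eq_bot [IsArtinianRing R] [Module.Finite R A]
    [FaithfulSMul R A] (hx : IsCliffordFamily w x) (hy : IsCliffordFamily w y)
    (h2 : IsUnit (2 : R)) (hw : ∀ i, IsUnit (w i)) (hm : Even m)
    (hxbot : Subalgebra.centralizer R (Set.range x) = ⊥)
    (hybot : Subalgebra.centralizer R (Set.range y) = ⊥) :
    ∃ T : Aˣ, ∀ i, x i * T = T * y i := by
  obtain ⟨T, hT⟩ := exists_unit_mem_of_mul_eq_one (hx.intertwiners_mul_eq_one hy h2 hw hm hxbot)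
    (hy.intertwiners_mul_eq_one hx h2 hw hm hybot)
  exact ⟨T, fun i => hT i (Finset.mem_univ i)⟩

end Even

section Field

variable {K A : Type*} [Field K] [Ring A] [Algebra K A] [Module.Finite K A]
  {m : ℕ} {w : Fin m → K} {x y : Fin m → A}

lemma two_pow_mul_finrank_intertwiners (hx : IsCliffordFamily w x) (hy : IsCliffordFamily w y)
    (h2 : IsUnit (2 : K)) (hw : ∀ i, IsUnit (w i)) (hm : Even m) (S : Finset (Fin m)) :
    2 ^ S.card * Module.finrank K (intertwiners K x y S) = Module.finrank K A := by
  induction S using Finset.induction_on with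
  | empty =>
    rw [intertwiners_empty, Finset.card_empty, pow_zero, one_mul, finrank_top]
  | insert i S hi ih =>
    set I := intertwiners K x y (insert i S)
    have hinj : Function.Injective (LinearMap.mulLeft K (twist x i)) :=
      (hx.isUnit_twist h2 hw i).mul_right_injective
    have hmap := (Submodule.equivMapOfInjective _ hinj I).finrank_eq
    have hadd := I.finrank_sup_add_finrank_inf_eq (I.map (LinearMap.mulLeft K (twist x i)))
    rw [(hx.disjoint_map_twist hy h2 hw hm S i).eq_bot, finrank_bot, ← hmap,
      hx.sup_map_twist_eq_intertwiners hy h2 hw hm hi] at hadd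
    rw [Finset.card_insert_of_notMem hi, ← ih, pow_succ, mul_assoc, two_mul, ← hadd, add_zero]

lemma centralizer_range_eq_center (hx : IsCliffordFamily w x) (h2 : IsUnit (2 : K))
    (hw : ∀ i, IsUnit (w i)) (hm : Even m) (hA : Module.finrank K A ≤ 2 ^ (m + 1)) :
    Subalgebra.centralizer K (Set.range x) = Subalgebra.center K A := by
  set C := Subalgebra.centralizer K (Set.range x)
  have hI : intertwiners K x x Finset.univ = C.toSubmodule := by
    ext T
    simp [C, intertwiners, Subalgebra.mem_centralizer_iff]
  have hC : Module.finrank K C ≤ 2 := by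
    have hrank := hx.two_pow_mul_finrank_intertwiners hx h2 hw hm Finset.univ
    rw [hI, Subalgebra.finrank_toSubmodule, Finset.card_univ, Fintype.card_fin] at hrank
    rw [pow_succ, ← hrank] at hA
    exact Nat.le_of_mul_le_mul_left hA (by positivity)
  refine le_antisymm (fun c hc => Subalgebra.mem_center_iff.mpr fun a => ?_)
    (Subalgebra.center_le_centralizer K _)
  have ha : a ∈ (Algebra.adjoin K (Set.range x)).toSubmodule * C.toSubmodule := by
    rw [← hI, hx.adjoin_mul_intertwiners_eq_top hx h2 hw hm]
    exact Submodule.mem_top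
  induction ha using Submodule.mul_induction_on' with
  | mem_mul_mem d hd t ht =>
    have hdc : c * d = d * c := Algebra.adjoin_le_centralizer_centralizer K _ hd c hc
    have htc : t * c = c * t :=
      congrArg Subtype.val (commute_of_finrank_le_two hC ⟨t, ht⟩ ⟨c, hc⟩).eq
    rw [mul_assoc, htc, ← mul_assoc, ← hdc, mul_assoc]
  | add a _ b _ ha hb => rw [add_mul, mul_add, ha, hb]

lemma exists_unit_intertwiner (hx : IsCliffordFamily w x) (hy : IsCliffordFamily w y)
    (h2 : IsUnit (2 : K)) (hw : ∀ i, IsUnit (w i)) (hm : Even m)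
    (hA : Module.finrank K A ≤ 2 ^ (m + 1)) : ∃ T : Aˣ, ∀ i, x i * T = T * y i := by
  let C := Subalgebra.center K A
  let : Algebra C A :=
    { C.val.toRingHom with
      algebraMap := C.val.toRingHom
      commutes' := fun c a => (Subalgebra.mem_center_iff.mp c.2 a).symm
      smul_def' := fun _ _ => rfl }
  have : Module.Finite C A := .of_restrictScalars_finite K C A
  have : IsArtinianRing C := .of_finite K C
  have centralizer_eq_bot {z : Fin m → A} (hz : IsCliffordFamily w z) :
      Subalgebra.centralizer C (Set.range z) = ⊥ := eq_bot_iff.mpr fun c hc => by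
    have hcenter : c ∈ C := (hz.centralizer_range_eq_center h2 hw hm hA).le hc
    exact Algebra.mem_bot.mpr ⟨⟨c, hcenter⟩, rfl⟩
  have h2C : IsUnit (2 : C) := map_ofNat (algebraMap K C) 2 ▸ h2.map (algebraMap K C)
  exact exists_unit_intertwiner_of_centralizer_eq_bot (hx.algebraMap_comp (S := C))
    hy.algebraMap_comp h2C (fun i => (hw i).map _) hm (centralizer_eq_bot hx)
    (centralizer_eq_bot hy)

end Field

section Odd

variable {K A : Type*} [Field K] [Ring A] [Algebra K A] [Module.Finite K A]
  {m : ℕ} {w : Fin (m + 1) → K} {x y : Fin (m + 1) → A}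

lemma mem_center_of_forall_succ_commute (hx : IsCliffordFamily w x) (h2 : IsUnit (2 : K))
    (hw : ∀ i, IsUnit (w i)) (hm : Even m) (hA : Module.finrank K A ≤ 2 ^ (m + 1)) {c : A}
    (hc : ∀ i : Fin m, Commute (x i.succ) c) : c ∈ Subalgebra.center K A := by
  rw [← (hx.comp_injective (Fin.succ_injective m)).centralizer_range_eq_center h2
    (fun i => hw i.succ) hm hA, Subalgebra.mem_centralizer_iff]
  rintro - ⟨i, rfl⟩
  exact hc i

lemma exists_unit_intertwiner_of_volumeElement_eq (hx : IsCliffordFamily w x)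
    (hy : IsCliffordFamily w y) (h2 : IsUnit (2 : K)) (hw : ∀ i, IsUnit (w i)) (hm : Even m)
    (hA : Module.finrank K A ≤ 2 ^ (m + 1)) (hvol : volumeElement x = volumeElement y) :
    ∃ T : Aˣ, ∀ i, x i * T = T * y i := by
  have hx' := hx.comp_injective (Fin.succ_injective m)
  have hy' := hy.comp_injective (Fin.succ_injective m)
  obtain ⟨T, hT⟩ := hx'.exists_unit_intertwiner hy' h2 (fun i => hw i.succ) hm hA
  have hcentral : volumeElement x ∈ Subalgebra.center K A :=
    hx.mem_center_of_forall_succ_commute h2 hw hm hA fun i =>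
      hx.commute_volumeElement hm.add_one i.succ
  have hunit : IsUnit (volumeElement (y ∘ Fin.succ)) :=
    isUnit_volumeElement fun i => hy'.isUnit h2 (hw i.succ)
  refine ⟨T, Fin.cases ?_ hT⟩
  apply hunit.mul_left_injective
  calc x 0 * T * volumeElement (y ∘ Fin.succ)
    _ = x 0 * volumeElement (x ∘ Fin.succ) * T := by
      rw [mul_assoc, ← volumeElement_mul_of_forall_mul_eq_mul hT, mul_assoc]
    _ = T * volumeElement y := by
      rw [← volumeElement_succ, ← hvol, Subalgebra.mem_center_iff.mp hcentral]
    _ = T * y 0 * volumeElement (y ∘ Fin.succ) := by rw [volumeElement_succ, mul_assoc]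

end Odd

end IsCliffordFamily

section Dimension

variable {R M : Type*} [CommRing R] [Invertible (2 : R)] [AddCommGroup M] [Module R M]

/-- The basis of a Clifford algebra indexed by the finite sets of basis vectors of the underlying
module, transported from the exterior algebra. -/
noncomputable def basisCliffordAlgebra {I : Type*} [LinearOrder I] (b : Module.Basis I R M)
    (Q : QuadraticForm R M) : Module.Basis (Finset I) R (CliffordAlgebra Q) :=
  b.ExteriorAlgebra.map (equivExterior Q).symm

variable [Nontrivial R] [Module.Free R M] [Module.Finite R M]

instance finite_cliffordAlgebra (Q : QuadraticForm R M) : Module.Finite R (CliffordAlgebra Q) :=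
  .of_basis (basisCliffordAlgebra (Module.finBasis R M) Q)

lemma finrank_cliffordAlgebra (Q : QuadraticForm R M) :
    Module.finrank R (CliffordAlgebra Q) = 2 ^ Module.finrank R M := by
  simp [Module.finrank_eq_card_basis (basisCliffordAlgebra (Module.finBasis R M) Q)]

end Dimension

theorem pauli_odd_general {K A : Type*} [Field K] [Ring A] [Algebra K A] [Module.Finite K A]
    (h2 : IsUnit (2 : K)) {n : ℕ} (hn : Odd n) (hA : Module.finrank K A ≤ 2 ^ n) {w : Fin n → K}
    (hw : ∀ a, IsUnit (w a)) {γ β : Fin n → A} (hγ : IsCliffordFamily w γ)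
    (hβ : IsCliffordFamily w β) (hprod : volumeElement β = volumeElement γ) :
    ∃ T : Aˣ, (∀ a, γ a = ↑T⁻¹ * β a * T) ∧
      ∀ T' : Aˣ, (∀ a, γ a = ↑T'⁻¹ * β a * T') →
        ∃ Z : Aˣ, (∀ V : A, Z * V = V * Z) ∧ (T' : A) = Z * T := by
  obtain ⟨k, rfl⟩ := hn
  have hm : Even (2 * k) := even_two_mul k
  obtain ⟨T, hT⟩ := hβ.exists_unit_intertwiner_of_volumeElement_eq hγ h2 hw hm hA hprod
  have hγT (a) : γ a = ↑T⁻¹ * β a * T := by rw [mul_assoc, hT, T.inv_mul_cancel_left]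
  refine ⟨T, hγT, fun T' hT' => ⟨T' * T⁻¹, fun V => ?_, by simp⟩⟩
  have hcomm (a) : Commute (β a) ↑(T' * T⁻¹) := by
    have h := (hT' a).symm.trans (hγT a)
    rw [mul_assoc, Units.inv_mul_eq_iff_eq_mul] at h
    rw [commute_iff_eq, Units.val_mul, ← mul_assoc, h]
    simp [mul_assoc]
  have hcenter := hβ.mem_center_of_forall_succ_commute h2 hw hm hA fun i => hcomm i.succ
  exact (Subalgebra.mem_center_iff.mp hcenter V).symm

/-- Generalized Pauli theorem, odd case: if `n = p + q` is odd, `γ`, `β` satisfy the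
defining anticommutation relations and `β₁⋯β_n = γ₁⋯γ_n`, then there is an
invertible `T` with `γ_a = T⁻¹ β_a T` for all `a`, unique up to multiplication by
an invertible central element. -/
theorem pauli_odd (p q : ℕ) (hn : Odd (p + q)) (γ β : Fin (p + q) → Cl p q)
    (hγ : ∀ a b, γ a * γ b + γ b * γ a = (2 * etaPQ p q a b) • (1 : Cl p q))
    (hβ : ∀ a b, β a * β b + β b * β a = (2 * etaPQ p q a b) • (1 : Cl p q))
    (hprod : ((List.finRange (p + q)).map β).prod = ((List.finRange (p + q)).map γ).prod) :
    ∃ T : (Cl p q)ˣ,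
      (∀ a, γ a = (↑T⁻¹ : Cl p q) * β a * (T : Cl p q)) ∧
      ∀ T' : (Cl p q)ˣ, (∀ a, γ a = (↑T'⁻¹ : Cl p q) * β a * (T' : Cl p q)) →
        ∃ Z : (Cl p q)ˣ, (∀ V : Cl p q, (Z : Cl p q) * V = V * (Z : Cl p q)) ∧
          (T' : Cl p q) = (Z : Cl p q) * (T : Cl p q) := by
  exact pauli_odd_general (w := fun a => if (a : ℕ) < p then 1 else -1) (isUnit_of_invertible 2)
    hn (by simp [finrank_cliffordAlgebra]) (fun a => by split_ifs <;> simp) hγ hβ hprod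
end

section
/- Let n = p + q and let Γ := {T ∈ Cl_{p,q} : T is invertible and involute(T)·ι(x)·T^{−1} ∈ ι(ℝⁿ) for every x ∈ ℝⁿ} be the Lipschitz group. Define the norm function N(T) := reverse(involute(T))·T. Then: (1) for every T ∈ Γ, N(T) is a nonzero scalar, i.e. N(T) = λ·e for some λ ∈ ℝ, λ ≠ 0; (2) N is multiplicative on Γ: N(UV) = N(U)·N(V) for all U, V ∈ Γ, and N(T^{−1}) = N(T)^{−1}. -/
open CliffordAlgebra

/-- The Lipschitz group `Γ_{p,q}`: invertible elements whose twisted conjugation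
preserves the grade-1 subspace `ι(ℝⁿ)`. -/
def lipschitzGrp (p q : ℕ) : Set (Cl p q) :=
  {T | IsUnit T ∧ ∀ x : Fin (p + q) → ℝ, ∃ y : Fin (p + q) → ℝ,
      involute T * ι (Qpq p q) x * Ring.inverse T = ι (Qpq p q) y}

/-- The norm function `N(T) = reverse(involute(T)) · T`. -/
noncomputable def normN (p q : ℕ) (T : Cl p q) : Cl p q :=
  reverse (involute T) * T

/-!
For `T` in the Lipschitz group, reversing the relation `involute T * ι x = ι y * T` shows that
`N(T) = reverse (involute T) * T = star T * T` satisfies `ι x * N(T) = involute N(T) * ι x` for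
every `x`. Since `ι v * a - involute a * ι v` is the contraction of `a` by the polar form of `v`, a
nondegenerate form forces all contractions of `N(T)` to vanish; it remains to see that such an
element is a scalar. Contractions commute with the linear identification of the Clifford and
exterior algebras.
In the exterior algebra, replacing a linear map `f` by `f + d(·)v` changes `⋀f a` by
`v ∧ ⋀f (d⌋a)`, so `⋀f a` does not depend on `f` once all contractions of `a` vanish; comparing
`f = id` with `f = 0` identifies `a` with its scalar part.

Once `N(T)` is a scalar it is central, and multiplicativity follows.
-/

section ExteriorAlgebra

variable {R M N : Type*} [CommRing R] [AddCommGroup M] [Module R M] [AddCommGroup N] [Module R N]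

theorem exteriorAlgebra_map_add_smulRight (f : M →ₗ[R] N) (d : Module.Dual R M) (v : N)
    (a : ExteriorAlgebra R M) :
    ExteriorAlgebra.map (f + d.smulRight v) a =
      ExteriorAlgebra.map f a +
        ExteriorAlgebra.ι R v * ExteriorAlgebra.map f (contractLeft d a) := by
  induction a using CliffordAlgebra.left_induction with
  | algebraMap r => simp
  | add a b ha hb => simp only [map_add, ha, hb, mul_add]; abel
  | ι_mul a m ha =>
    set φ := ExteriorAlgebra.map (R := R) f
    have h_sq : ExteriorAlgebra.ι R v * ExteriorAlgebra.ι R v = 0 := ExteriorAlgebra.ι_sq_zero v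
    have h_swap : ExteriorAlgebra.ι R v * ExteriorAlgebra.ι R (f m) =
        -(ExteriorAlgebra.ι R (f m) * ExteriorAlgebra.ι R v) :=
      eq_neg_of_add_eq_zero_left (ExteriorAlgebra.ι_add_mul_swap v (f m))
    calc ExteriorAlgebra.map (f + d.smulRight v) (ExteriorAlgebra.ι R m * a)
        = (ExteriorAlgebra.ι R (f m) + d m • ExteriorAlgebra.ι R v) *
            (φ a + ExteriorAlgebra.ι R v * φ (contractLeft d a)) := by
          rw [map_mul, ha, ExteriorAlgebra.map_apply_ι]
          simp only [LinearMap.add_apply, LinearMap.smulRight_apply, map_add, map_smul]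
      _ = ExteriorAlgebra.ι R (f m) * φ a + ExteriorAlgebra.ι R v *
            (d m • φ a - ExteriorAlgebra.ι R (f m) * φ (contractLeft d a)) := by
          simp only [add_mul, mul_add, mul_sub, smul_mul_assoc, mul_smul_comm, ← mul_assoc,
            h_sq, h_swap, neg_mul, smul_zero, add_zero]
          abel
      _ = φ (ExteriorAlgebra.ι R m * a) +
            ExteriorAlgebra.ι R v * φ (contractLeft d (ExteriorAlgebra.ι R m * a)) := by
          rw [ExteriorAlgebra.ι, contractLeft_ι_mul, map_sub, map_smul, map_mul, map_mul]
          simp only [φ, ← ExteriorAlgebra.map_apply_ι]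

theorem exteriorAlgebra_map_zero (a : ExteriorAlgebra R M) :
    ExteriorAlgebra.map (0 : M →ₗ[R] N) a =
      algebraMap R _ (ExteriorAlgebra.algebraMapInv a) := by
  suffices ExteriorAlgebra.map (0 : M →ₗ[R] N) =
      (Algebra.ofId R _).comp ExteriorAlgebra.algebraMapInv from DFunLike.congr_fun this a
  ext m
  simp [ExteriorAlgebra.algebraMapInv]

variable [Module.Finite R M] [Module.Projective R M]

theorem exteriorAlgebra_map_eq_of_contractLeft_eq_zero {a : ExteriorAlgebra R M}
    (ha : ∀ d : Module.Dual R M, contractLeft d a = 0) (f g : M →ₗ[R] N) :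
    ExteriorAlgebra.map f a = ExteriorAlgebra.map g a := by
  suffices h : ∀ t g, ExteriorAlgebra.map (g + dualTensorHom R M N t) a =
      ExteriorAlgebra.map g a by
    obtain ⟨t, ht⟩ := dualTensorHom_bijective.surjective (f - g)
    rw [← h t g, ht, add_sub_cancel]
  intro t
  induction t with
  | zero => simp
  | tmul d v =>
    intro g
    have h_rank_one : dualTensorHom R M N (d ⊗ₜ v) = d.smulRight v := by ext; simp
    rw [h_rank_one, exteriorAlgebra_map_add_smulRight, ha, map_zero, mul_zero, add_zero]
  | add s t hs ht => intro g; rw [map_add, ← add_assoc, ht, hs]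

theorem exteriorAlgebra_mem_range_algebraMap_of_contractLeft_eq_zero {a : ExteriorAlgebra R M}
    (ha : ∀ d : Module.Dual R M, contractLeft d a = 0) :
    a ∈ Set.range (algebraMap R (ExteriorAlgebra R M)) := by
  refine ⟨ExteriorAlgebra.algebraMapInv a, ?_⟩
  calc algebraMap R _ (ExteriorAlgebra.algebraMapInv a)
      = ExteriorAlgebra.map (0 : M →ₗ[R] M) a := (exteriorAlgebra_map_zero a).symm
    _ = ExteriorAlgebra.map LinearMap.id a :=
      exteriorAlgebra_map_eq_of_contractLeft_eq_zero ha _ _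
    _ = a := by rw [ExteriorAlgebra.map_id, AlgHom.id_apply]

end ExteriorAlgebra

section CliffordAlgebra

variable {R M : Type*} [CommRing R] [AddCommGroup M] [Module R M] {Q : QuadraticForm R M}

theorem ι_mul_sub_involute_mul_ι (v : M) (a : CliffordAlgebra Q) :
    ι Q v * a - involute a * ι Q v = contractLeft (Q.polarBilin v) a := by
  induction a using CliffordAlgebra.left_induction with
  | algebraMap r => simp [Algebra.commutes]
  | add a b ha hb => rw [map_add, map_add, ← ha, ← hb]; noncomm_ring
  | ι_mul a m ha =>
    have h_swap : ι Q v * ι Q m = algebraMap R _ (Q.polarBilin v m) - ι Q m * ι Q v :=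
      eq_sub_of_add_eq (ι_mul_ι_add_swap v m)
    rw [contractLeft_ι_mul, ← ha, map_mul, involute_ι, ← mul_assoc, h_swap, Algebra.smul_def]
    noncomm_ring

theorem isUnit_of_isUnit_algebraMap [Module.Free R M] {r : R}
    (hr : IsUnit (algebraMap R (CliffordAlgebra Q) r)) : IsUnit r := by
  obtain ⟨B, hB⟩ := LinearMap.BilinMap.toQuadraticMap_surjective (0 - Q)
  obtain ⟨b, hb⟩ := hr.exists_right_inv
  let retraction : CliffordAlgebra Q →ₗ[R] R :=
    (ExteriorAlgebra.algebraMapInv (M := M)).toLinearMap ∘ₗ changeForm hB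
  have h_one : retraction 1 = 1 := by
    rw [LinearMap.comp_apply, changeForm_one, AlgHom.toLinearMap_apply, map_one]
  refine .of_mul_eq_one (retraction b) ?_
  rw [← smul_eq_mul, ← map_smul, Algebra.smul_def, hb, h_one]

variable [Module.Free R M] [Module.Finite R M]

theorem mem_range_algebraMap_of_contractLeft_eq_zero {a : CliffordAlgebra Q}
    (ha : ∀ d : Module.Dual R M, contractLeft d a = 0) :
    a ∈ Set.range (algebraMap R (CliffordAlgebra Q)) := by
  obtain ⟨B, hB⟩ := LinearMap.BilinMap.toQuadraticMap_surjective (0 - Q)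
  obtain ⟨r, hr⟩ :=
    exteriorAlgebra_mem_range_algebraMap_of_contractLeft_eq_zero (a := changeForm hB a) fun d => by
      rw [← changeForm_contractLeft, ha, map_zero]
  refine ⟨r, (changeFormEquiv hB).injective ?_⟩
  rw [changeFormEquiv_apply, changeFormEquiv_apply, changeForm_algebraMap]
  exact hr

theorem mem_range_algebraMap_of_ι_mul_eq_involute_mul_ι (hQ : Function.Surjective Q.polarBilin)
    {a : CliffordAlgebra Q} (ha : ∀ v, ι Q v * a = involute a * ι Q v) :
    a ∈ Set.range (algebraMap R (CliffordAlgebra Q)) := by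
  refine mem_range_algebraMap_of_contractLeft_eq_zero fun d => ?_
  obtain ⟨v, rfl⟩ := hQ d
  rw [← ι_mul_sub_involute_mul_ι, ha, sub_self]

end CliffordAlgebra

section LipschitzGroup

variable {R M : Type*} [CommRing R] [AddCommGroup M] [Module R M] {Q : QuadraticForm R M}

/-- The Lipschitz group of `Q`, defined as a set by the twisted conjugation condition; in contrast,
Mathlib's `lipschitzGroup Q` is the group of units generated by the invertible vectors. -/
def lipschitzSet (Q : QuadraticForm R M) : Set (CliffordAlgebra Q) :=
  {T | IsUnit T ∧ ∀ x, ∃ y, involute T * ι Q x * Ring.inverse T = ι Q y}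

theorem ι_mul_star_mul_self_of_mem_lipschitzSet {T : CliffordAlgebra Q}
    (hT : T ∈ lipschitzSet Q) (x : M) :
    ι Q x * (star T * T) = involute (star T * T) * ι Q x := by
  obtain ⟨hunit, hconj⟩ := hT
  obtain ⟨y, hy⟩ := hconj x
  have h_left : involute T * ι Q x = ι Q y * T := by
    rw [← hy, Ring.inverse_mul_cancel_right _ _ hunit]
  have h_right : ι Q x * star T = involute (star T) * ι Q y := by
    simpa only [reverse.map_mul, reverse_ι, star_def', involute_involute, ← star_def] using
      congrArg reverse h_left
  calc ι Q x * (star T * T) = involute (star T) * (ι Q y * T) := by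
        rw [← mul_assoc, h_right, mul_assoc]
    _ = involute (star T * T) * ι Q x := by rw [← h_left, map_mul, mul_assoc]

theorem star_mul_self_mul {U V : CliffordAlgebra Q}
    (hU : star U * U ∈ Set.range (algebraMap R (CliffordAlgebra Q))) :
    star (U * V) * (U * V) = star U * U * (star V * V) := by
  obtain ⟨r, hr⟩ := hU
  calc star (U * V) * (U * V) = star V * (star U * U) * V := by
        simp only [star_mul, mul_assoc]
    _ = star U * U * (star V * V) := by rw [← hr, ← Algebra.commutes, mul_assoc]

theorem norm_on_lipschitz_general [Module.Free R M] [Module.Finite R M]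
    (hQ : Function.Surjective Q.polarBilin) :
    (∀ T ∈ lipschitzSet Q, ∃ lam : R, IsUnit lam ∧ star T * T = lam • (1 : CliffordAlgebra Q)) ∧
    (∀ U ∈ lipschitzSet Q, ∀ V : CliffordAlgebra Q,
      star (U * V) * (U * V) = star U * U * (star V * V)) ∧
    (∀ T ∈ lipschitzSet Q,
      star (Ring.inverse T) * Ring.inverse T = Ring.inverse (star T * T)) := by
  have h_scalar : ∀ T ∈ lipschitzSet Q,
      star T * T ∈ Set.range (algebraMap R (CliffordAlgebra Q)) :=
    fun T hT => mem_range_algebraMap_of_ι_mul_eq_involute_mul_ι hQ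
      (ι_mul_star_mul_self_of_mem_lipschitzSet hT)
  have h_unit : ∀ T ∈ lipschitzSet Q, IsUnit (star T * T) := fun T hT => hT.1.star.mul hT.1
  refine ⟨fun T hT => ?_, fun U hU V => star_mul_self_mul (h_scalar U hU), fun T hT => ?_⟩
  · obtain ⟨lam, hlam⟩ := h_scalar T hT
    exact ⟨lam, isUnit_of_isUnit_algebraMap (hlam ▸ h_unit T hT),
      by rw [← hlam, Algebra.algebraMap_eq_smul_one]⟩
  · have h_mul : star T * T * (star (Ring.inverse T) * Ring.inverse T) = 1 := by
      rw [← star_mul_self_mul (h_scalar T hT), Ring.mul_inverse_cancel _ hT.1, star_one, one_mul]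
    exact (left_inv_eq_right_inv (Ring.inverse_mul_cancel _ (h_unit T hT)) h_mul).symm

end LipschitzGroup

section WeightedSumSquares

variable {R n : Type*} [CommRing R] [Fintype n]

theorem polar_weightedSumSquares (w x y : n → R) :
    QuadraticMap.polar (QuadraticMap.weightedSumSquares R w) x y =
      ∑ i, 2 * w i * x i * y i := by
  simp only [QuadraticMap.polar, QuadraticMap.weightedSumSquares_apply,
    ← Finset.sum_sub_distrib, Pi.add_apply, smul_eq_mul]
  exact Finset.sum_congr rfl fun i _ => by ring

theorem surjective_polarBilin_weightedSumSquares {w : n → R} (hw : ∀ i, IsUnit (2 * w i)) :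
    Function.Surjective (QuadraticMap.weightedSumSquares R w).polarBilin := by
  classical
  intro d
  refine ⟨fun i => Ring.inverse (2 * w i) * d (Pi.single i 1), LinearMap.pi_ext' fun j => ?_⟩
  ext
  simp [polar_weightedSumSquares, Pi.single_apply, Ring.mul_inverse_cancel_left _ _ (hw j)]

end WeightedSumSquares

theorem surjective_polarBilin_Qpq (p q : ℕ) : Function.Surjective (Qpq p q).polarBilin :=
  surjective_polarBilin_weightedSumSquares fun i => by split_ifs <;> norm_num

/-- On the Lipschitz group, `N` takes nonzero scalar values and is multiplicative,
with `N(T⁻¹) = N(T)⁻¹`. -/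
theorem norm_on_lipschitz (p q : ℕ) :
    (∀ T ∈ lipschitzGrp p q, ∃ lam : ℝ, lam ≠ 0 ∧ normN p q T = lam • (1 : Cl p q)) ∧
    (∀ U ∈ lipschitzGrp p q, ∀ V ∈ lipschitzGrp p q,
      normN p q (U * V) = normN p q U * normN p q V) ∧
    (∀ T ∈ lipschitzGrp p q,
      normN p q (Ring.inverse T) = Ring.inverse (normN p q T)) := by
  obtain ⟨h_scalar, h_mul, h_inv⟩ := norm_on_lipschitz_general (surjective_polarBilin_Qpq p q)
  exact ⟨fun T hT => (h_scalar T hT).imp fun _ h => ⟨h.1.ne_zero, h.2⟩,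
    fun U hU V _ => h_mul U hU V, h_inv⟩
end

section
/- Let n = p + q = 3 and let U ∈ Cl_{p,q}. Then the element U·Ũ·Û·ĤŨ (the product U · reverse(U) · involute(U) · involute(reverse(U))) is a scalar: there exists d ∈ ℝ (called Det U) with U·reverse(U)·involute(U)·involute(reverse(U)) = d·e. Moreover, U is invertible in Cl_{p,q} if and only if d ≠ 0, and in that case U^{−1} = d^{−1} · reverse(U)·involute(U)·involute(reverse(U)). -/
open CliffordAlgebra

/-!
The paravectors `r + v` are fixed by reversion and closed under `(x, y) ↦ xyx`, hence, after
polarization, under `(x, y, z) ↦ xyz + zyx`. When three vectors span the underlying module, every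
element of the Clifford algebra is a sum of products of three paravectors, so `W + W̃` is a
paravector for every `W`. Applying this to the cross terms of `(x + y)(x + y)~` shows that
`N = UŨ` is a paravector `r + v`, and `N N̂ = (r + v)(r - v) = r² - Q(v)` is the determinant.
When it is a unit it yields a right inverse of `U`, which is two-sided because the algebra is a
finite module over a commutative ring.
-/

section Algebra

variable {R A : Type*} [CommRing R] [Ring A] [Algebra R A]

theorem adjoin_toSubmodule_le_of_mul_mem {s : Set A} {W : Submodule R A}
    (one_mem : 1 ∈ W) (mul_mem : ∀ x ∈ s, ∀ w ∈ W, x * w ∈ W) :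
    (Algebra.adjoin R s).toSubmodule ≤ W := by
  intro x (hx : x ∈ Algebra.adjoin R s)
  suffices ∀ w ∈ W, x * w ∈ W by simpa only [mul_one] using this 1 one_mem
  induction hx using Algebra.adjoin_induction with
  | mem x hx => exact mul_mem x hx
  | algebraMap r => exact fun w hw => by simpa only [← Algebra.smul_def] using W.smul_mem r hw
  | add x y _ _ hx hy =>
    exact fun w hw => by simpa only [add_mul] using add_mem (hx w hw) (hy w hw)
  | mul x y _ _ hx hy => exact fun w hw => by simpa only [mul_assoc] using hx _ (hy w hw)

variable (R A) in
theorem isDedekindFiniteMonoid_of_finite [Module.Finite R A] : IsDedekindFiniteMonoid A := by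
  refine IsDedekindFiniteMonoid.iff_isLeftRegular_of_mul_eq_one.mpr fun x y hxy => ?_
  have surjective_mul : Function.Surjective (LinearMap.mulLeft R x) := fun z =>
    ⟨y * z, by rw [LinearMap.mulLeft_apply, ← mul_assoc, hxy, one_mul]⟩
  exact OrzechProperty.injective_of_surjective_endomorphism _ surjective_mul

end Algebra

section Paravectors

variable {R M : Type*} [CommRing R] [AddCommGroup M] [Module R M] (Q : QuadraticForm R M)

/-- The *paravectors* of a Clifford algebra: sums of a scalar and a vector. -/
def paravectors : Submodule R (CliffordAlgebra Q) :=
  1 ⊔ LinearMap.range (ι Q)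

variable {Q}

theorem mem_paravectors {x : CliffordAlgebra Q} :
    x ∈ paravectors Q ↔ ∃ (r : R) (v : M), algebraMap R _ r + ι Q v = x := by
  simp only [paravectors, Submodule.mem_sup, Submodule.mem_one, LinearMap.mem_range,
    exists_exists_eq_and]

theorem algebraMap_mem_paravectors (r : R) : algebraMap R _ r ∈ paravectors Q :=
  mem_paravectors.mpr ⟨r, 0, by rw [map_zero, add_zero]⟩

theorem ι_mem_paravectors (v : M) : ι Q v ∈ paravectors Q :=
  mem_paravectors.mpr ⟨0, v, by rw [map_zero, zero_add]⟩

theorem reverse_of_mem_paravectors {x : CliffordAlgebra Q} (hx : x ∈ paravectors Q) :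
    reverse x = x := by
  obtain ⟨r, v, rfl⟩ := mem_paravectors.mp hx
  rw [map_add, reverse.commutes, reverse_ι]

theorem exists_mul_involute_eq_algebraMap_of_mem_paravectors {x : CliffordAlgebra Q}
    (hx : x ∈ paravectors Q) : ∃ d : R, x * involute x = algebraMap R _ d := by
  obtain ⟨r, v, rfl⟩ := mem_paravectors.mp hx
  refine ⟨r ^ 2 - Q v, ?_⟩
  simp only [Algebra.algebraMap_eq_smul_one, map_add, map_smul, map_one, involute_ι, mul_add,
    add_mul, mul_neg, smul_mul_assoc, mul_smul_comm, mul_one, one_mul, ι_sq_scalar]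
  module

theorem mul_mul_self_mem_paravectors {x y : CliffordAlgebra Q} (hx : x ∈ paravectors Q)
    (hy : y ∈ paravectors Q) : x * y * x ∈ paravectors Q := by
  obtain ⟨r, v, rfl⟩ := mem_paravectors.mp hx
  obtain ⟨s, w, rfl⟩ := mem_paravectors.mp hy
  refine mem_paravectors.mpr ⟨r ^ 2 * s + r * QuadraticMap.polar Q v w + s * Q v,
    r ^ 2 • w + (2 * r * s) • v + (QuadraticMap.polar Q v w • v - Q v • w), ?_⟩
  have hvw : ι Q v * ι Q w = QuadraticMap.polar Q v w • 1 - ι Q w * ι Q v := by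
    rw [ι_mul_ι_comm, Algebra.algebraMap_eq_smul_one]
  rw [map_add (ι Q), ← ι_mul_ι_mul_ι]
  simp only [Algebra.algebraMap_eq_smul_one, map_add, map_smul, mul_add, add_mul, smul_mul_assoc,
    mul_smul_comm, mul_one, one_mul, ι_sq_scalar]
  rw [hvw]
  module

theorem mul_mul_add_mul_mul_mem_paravectors {x y z : CliffordAlgebra Q} (hx : x ∈ paravectors Q)
    (hy : y ∈ paravectors Q) (hz : z ∈ paravectors Q) :
    x * y * z + z * y * x ∈ paravectors Q := by
  have polarization : x * y * z + z * y * x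
      = (x + z) * y * (x + z) - x * y * x - z * y * z := by noncomm_ring
  rw [polarization]
  exact sub_mem (sub_mem (mul_mul_self_mem_paravectors (add_mem hx hz) hy)
    (mul_mul_self_mem_paravectors hx hy)) (mul_mul_self_mem_paravectors hz hy)

theorem add_reverse_mem_paravectors {U : CliffordAlgebra Q} (hU : U ∈ paravectors Q ^ 3) :
    U + reverse U ∈ paravectors Q := by
  rw [pow_succ, pow_two] at hU
  induction hU using Submodule.mul_induction_on' with
  | mem_mul_mem a ha z hz =>
    induction ha using Submodule.mul_induction_on' with
    | mem_mul_mem x hx y hy =>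
      rw [reverse.map_mul, reverse.map_mul, reverse_of_mem_paravectors hx,
        reverse_of_mem_paravectors hy, reverse_of_mem_paravectors hz, ← mul_assoc]
      exact mul_mul_add_mul_mul_mem_paravectors hx hy hz
    | add a _ b _ iha ihb =>
      rw [add_mul, map_add, add_add_add_comm]
      exact add_mem iha ihb
  | add a _ b _ iha ihb =>
    rw [map_add, add_add_add_comm]
    exact add_mem iha ihb

theorem mul_reverse_mem_paravectors (h : paravectors Q ^ 3 = ⊤) (U : CliffordAlgebra Q) :
    U * reverse U ∈ paravectors Q := by
  induction U using left_induction with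
  | algebraMap r =>
    rw [reverse.commutes, ← map_mul]
    exact algebraMap_mem_paravectors _
  | ι_mul x v hx =>
    rw [reverse.map_mul, reverse_ι, mul_assoc, ← mul_assoc x, ← mul_assoc]
    exact mul_mul_self_mem_paravectors (ι_mem_paravectors v) hx
  | add x y hx hy =>
    have hxy := add_reverse_mem_paravectors (U := x * reverse y) (h ▸ Submodule.mem_top)
    rw [reverse.map_mul, reverse_reverse] at hxy
    have expand : (x + y) * reverse (x + y)
        = x * reverse x + y * reverse y + (x * reverse y + y * reverse x) := by
      rw [map_add]; noncomm_ring
    rw [expand]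
    exact add_mem (add_mem hx hy) hxy

theorem adjoin_ι_image_insert_le (e : M) (s : Set M) :
    (Algebra.adjoin R (ι Q '' insert e s)).toSubmodule ≤
      (Algebra.adjoin R (ι Q '' s)).toSubmodule ⊔
        (Algebra.adjoin R (ι Q '' s)).toSubmodule.map (LinearMap.mulLeft R (ι Q e)) := by
  set A := Algebra.adjoin R (ι Q '' s)
  have mem_iff {x : CliffordAlgebra Q} :
      x ∈ A.toSubmodule ⊔ A.toSubmodule.map (LinearMap.mulLeft R (ι Q e)) ↔
        ∃ a ∈ A, ∃ b ∈ A, a + ι Q e * b = x := by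
    simp only [Submodule.mem_sup, Submodule.mem_map, Subalgebra.mem_toSubmodule,
      LinearMap.mulLeft_apply, exists_exists_and_eq_and]
  refine adjoin_toSubmodule_le_of_mul_mem (Submodule.mem_sup_left A.one_mem) ?_
  rintro _ ⟨v, rfl | hv, rfl⟩ x hx <;> obtain ⟨a, ha, b, hb, rfl⟩ := mem_iff.mp hx
  · refine mem_iff.mpr ⟨Q v • b, A.smul_mem hb _, a, ha, ?_⟩
    rw [mul_add, ← mul_assoc, ι_sq_scalar, ← Algebra.smul_def, add_comm]
  · have hvA : ι Q v ∈ A := Algebra.subset_adjoin ⟨v, hv, rfl⟩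
    refine mem_iff.mpr ⟨ι Q v * a + QuadraticMap.polar Q v e • b,
      A.add_mem (A.mul_mem hvA ha) (A.smul_mem hb _), -(ι Q v * b),
      A.neg_mem (A.mul_mem hvA hb), ?_⟩
    rw [Algebra.smul_def, ← ι_mul_ι_add_swap]
    noncomm_ring

theorem adjoin_ι_image_le_paravectors_pow (s : Finset M) :
    (Algebra.adjoin R (ι Q '' s)).toSubmodule ≤ paravectors Q ^ s.card := by
  classical
  induction s using Finset.induction_on with
  | empty => simp [Algebra.toSubmodule_bot]
  | insert e s he ih =>
    rw [Finset.coe_insert, Finset.card_insert_of_notMem he, pow_succ']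
    refine (adjoin_ι_image_insert_le e s).trans (sup_le ?_ ?_)
    · exact ih.trans (le_mul_of_one_le_left' le_sup_left)
    · rintro _ ⟨x, hx, rfl⟩
      exact Submodule.mul_mem_mul (ι_mem_paravectors e) (ih hx)

theorem adjoin_ι_image_eq_top {s : Set M} (hs : Submodule.span R s = ⊤) :
    Algebra.adjoin R (ι Q '' s) = ⊤ := by
  rw [← Algebra.adjoin_span, ← Submodule.map_span, hs, Submodule.map_top, LinearMap.coe_range,
    adjoin_range_ι]

theorem paravectors_pow_eq_top {κ : Type*} [Fintype κ] {b : κ → M}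
    (hb : Submodule.span R (Set.range b) = ⊤) {n : ℕ} (hn : Fintype.card κ ≤ n) :
    paravectors Q ^ n = ⊤ := by
  classical
  have card_le : (Finset.univ.image b).card ≤ n := Finset.card_image_le.trans hn
  refine top_unique ?_
  calc ⊤ = (Algebra.adjoin R (ι Q '' Set.range b)).toSubmodule := by
        rw [adjoin_ι_image_eq_top hb, Algebra.top_toSubmodule]
    _ = (Algebra.adjoin R (ι Q '' (Finset.univ.image b : Finset M))).toSubmodule := by
        rw [Finset.coe_image, Finset.coe_univ, Set.image_univ]
    _ ≤ paravectors Q ^ (Finset.univ.image b).card := adjoin_ι_image_le_paravectors_pow _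
    _ ≤ paravectors Q ^ n := pow_le_pow_right' le_sup_left card_le

theorem finite_of_paravectors_pow_eq_top [Module.Finite R M] {n : ℕ}
    (h : paravectors Q ^ n = ⊤) : Module.Finite R (CliffordAlgebra Q) := by
  have fg_paravectors : (paravectors Q).FG := by
    rw [paravectors, Submodule.one_eq_range]
    exact (Submodule.fg_range _).sup (Submodule.fg_range _)
  exact ⟨h ▸ fg_paravectors.pow n⟩

theorem isUnit_cliffordAlgebra_algebraMap_iff [Invertible (2 : R)] {r : R} :
    IsUnit (algebraMap R (CliffordAlgebra Q) r) ↔ IsUnit r := by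
  refine ⟨fun h => (ExteriorAlgebra.isUnit_algebraMap M r).mp ?_, fun h => h.map _⟩
  exact h.algebraMap_of_algebraMap (equivExterior Q).toLinearMap (by simp)

theorem isUnit_reverse {U : CliffordAlgebra Q} (hU : IsUnit U) : IsUnit (reverse U) :=
  (hU.map reverseOp).unop

theorem det_and_inverse_n3_general [Invertible (2 : R)] {κ : Type*} [Fintype κ] {b : κ → M}
    (hb : Submodule.span R (Set.range b) = ⊤) (hκ : Fintype.card κ ≤ 3) (U : CliffordAlgebra Q) :
    ∃ d : R,
      U * reverse U * involute U * involute (reverse U) = d • (1 : CliffordAlgebra Q) ∧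
      (IsUnit U ↔ IsUnit d) ∧
      (IsUnit d →
        U * (Ring.inverse d • (reverse U * involute U * involute (reverse U))) = 1 ∧
        (Ring.inverse d • (reverse U * involute U * involute (reverse U))) * U = 1) := by
  have span_pow : paravectors Q ^ 3 = ⊤ := paravectors_pow_eq_top hb hκ
  have : Module.Finite R M := ⟨hb ▸ Submodule.fg_span (Set.finite_range b)⟩
  have := finite_of_paravectors_pow_eq_top span_pow
  have := isDedekindFiniteMonoid_of_finite R (CliffordAlgebra Q)
  obtain ⟨d, hd⟩ := exists_mul_involute_eq_algebraMap_of_mem_paravectors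
    (mul_reverse_mem_paravectors span_pow U)
  rw [map_mul, ← mul_assoc] at hd
  have right_inverse (h : IsUnit d) :
      U * (Ring.inverse d • (reverse U * involute U * involute (reverse U))) = 1 := by
    rw [mul_smul_comm, ← mul_assoc, ← mul_assoc, hd, Algebra.smul_def, ← map_mul,
      Ring.inverse_mul_cancel d h, map_one]
  refine ⟨d, by rw [hd, Algebra.algebraMap_eq_smul_one], ⟨fun hU => ?_, fun h => ?_⟩,
    fun h => ⟨right_inverse h, mul_eq_one_symm (right_inverse h)⟩⟩
  · have hU' := isUnit_reverse hU
    rw [← isUnit_cliffordAlgebra_algebraMap_iff (Q := Q), ← hd]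
    exact ((hU.mul hU').mul (hU.map involute)).mul (hU'.map involute)
  · exact .of_mul_eq_one _ (right_inverse h)

end Paravectors

/-- For `n = p + q = 3`, the element `U·Ũ·Û·involute(Ũ)` is a scalar `d • e`
(the determinant of `U`); `U` is invertible iff `d ≠ 0`, in which case
`U⁻¹ = d⁻¹ • Ũ·Û·involute(Ũ)`. -/
theorem det_and_inverse_n3 (p q : ℕ) (h : p + q = 3) (U : Cl p q) :
    ∃ d : ℝ,
      U * reverse U * involute U * involute (reverse U) = d • (1 : Cl p q) ∧
      (IsUnit U ↔ d ≠ 0) ∧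
      (d ≠ 0 →
        U * (d⁻¹ • (reverse U * involute U * involute (reverse U))) = 1 ∧
        (d⁻¹ • (reverse U * involute U * involute (reverse U))) * U = 1) := by
  simpa only [isUnit_iff_ne_zero, Ring.inverse_eq_inv'] using
    det_and_inverse_n3_general (Pi.basisFun ℝ (Fin (p + q))).span_eq
      (by rw [Fintype.card_fin, h]) U
end

section
/- Let n = p + q ≤ 5. Suppose T ∈ Cl_{p,q} is homogeneous with respect to the ℤ/2-grading (T lies in the even part or in the odd part) and satisfies reverse(T)·T = e or reverse(T)·T = −e. Then T is invertible (with T^{−1} = ±reverse(T)) and T·ι(x)·T^{−1} ∈ ι(ℝⁿ) for every x ∈ ℝⁿ; that is, for n ≤ 5 the defining condition 'T x T^{−1} ∈ Cl¹_{p,q} for all x ∈ Cl¹_{p,q}' of the spin groups holds automatically, so Pin(p,q) = {T ∈ Cl^{(0)}_{p,q} ∪ Cl^{(1)}_{p,q} : reverse(T)·T = ±e}. -/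
open CliffordAlgebra

/-!
Put `y = T x T⁻¹`. Since `T` is homogeneous and `T⁻¹` is a multiple of `reverse T`, the element
`y` is odd and fixed by the reversion. In an orthogonal basis, a product of `k` distinct basis
vectors is odd and fixed by the reversion only if `k ≡ 1 mod 4`, so for `n ≤ 5` we get `y = v + ω`
with `v` a vector and `ω` a multiple of the product of a five-element basis, which is central with
scalar square. If `Q x ≠ 0`, comparing `y² = Q x` with `(v + ω)² = Q v + 2 v ω + ω²` shows that
`v ω` is a scalar `s`, whence `(Q v) ω = s v` and `ω² v = s ω`. So `ω` is a multiple of `v` if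
`Q v ≠ 0`, `v` is a multiple of `ω` if `ω² ≠ 0`, and otherwise `2 s = Q x` and `v = 0`. Thus `y` is
a vector or is central, and in the latter case `y = x`. Vectors with `Q x ≠ 0` span the whole space
unless `Q = 0`, and then every vector commutes with `T` up to sign.
-/

theorem odd_choose_two_of_mod_four_eq_three {k : ℕ} (hk : k % 4 = 3) : Odd (k.choose 2) := by
  obtain ⟨j, rfl⟩ : ∃ j, k = 4 * j + 3 := ⟨k / 4, by omega⟩
  rw [Nat.choose_two_right]
  refine ⟨4 * j ^ 2 + 5 * j + 1, Nat.div_eq_of_eq_mul_left two_pos ?_⟩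
  rw [Nat.add_succ_sub_one]
  ring

section CommRing

variable {R M : Type*} [CommRing R] [AddCommGroup M] [Module R M] {Q : QuadraticForm R M}

theorem ι_mul_eq_involute_mul_ι {x : M} (hx : ∀ z, Q.IsOrtho x z) (y : CliffordAlgebra Q) :
    ι Q x * y = involute y * ι Q x := by
  induction y using CliffordAlgebra.left_induction with
  | algebraMap r => rw [AlgHom.commutes, Algebra.commutes]
  | add y z hy hz => rw [mul_add, map_add, add_mul, hy, hz]
  | ι_mul y z hy =>
    rw [map_mul, involute_ι, ι_mul_ι_mul_of_isOrtho _ (hx z), hy, neg_mul, neg_mul, mul_assoc]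

theorem conj_ι_mem_range_of_forall_isOrtho {T : (CliffordAlgebra Q)ˣ}
    (hT : involute (T : CliffordAlgebra Q) = T ∨ involute (T : CliffordAlgebra Q) = -T)
    {x : M} (hx : ∀ z, Q.IsOrtho x z) : T * ι Q x * ↑T⁻¹ ∈ LinearMap.range (ι Q) := by
  have hcomm := ι_mul_eq_involute_mul_ι hx (T : CliffordAlgebra Q)
  rcases hT with h | h
  · exact ⟨x, by rw [h] at hcomm; simp [← hcomm, mul_assoc]⟩
  · exact ⟨-x, by
      rw [h, neg_mul, ← neg_eq_iff_eq_neg] at hcomm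
      simp [← hcomm, mul_assoc]⟩

theorem reverse_mul_ι_mul_reverse (T : CliffordAlgebra Q) (x : M) :
    reverse (T * ι Q x * reverse T) = T * ι Q x * reverse T := by
  simp [mul_assoc]

theorem involute_mul_ι_mul_reverse {T : CliffordAlgebra Q}
    (hT : involute T = T ∨ involute T = -T) (x : M) :
    involute (T * ι Q x * reverse T) = -(T * ι Q x * reverse T) := by
  rw [map_mul, map_mul, ← reverse_involute, involute_ι]
  rcases hT with hT | hT <;> simp [hT]

theorem mem_center_of_forall_ι_mul {ω : CliffordAlgebra Q}
    (hω : ∀ x, ι Q x * ω = ω * ι Q x) : ω ∈ Subalgebra.center R (CliffordAlgebra Q) := by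
  rw [Subalgebra.mem_center_iff]
  intro y
  induction y using CliffordAlgebra.induction with
  | algebraMap r => exact Algebra.commutes r ω
  | ι x => exact hω x
  | mul y z hy hz => rw [mul_assoc, hz, ← mul_assoc, hy, mul_assoc]
  | add y z hy hz => rw [add_mul, mul_add, hy, hz]

/-- The product `v₁ ⋯ v_k` in the Clifford algebra of a list of vectors; for an orthogonal list
this is a blade in the sense of geometric algebra. -/
def blade (Q : QuadraticForm R M) (l : List M) : CliffordAlgebra Q :=
  (l.map (ι Q)).prod

@[simp]
theorem blade_nil : blade Q [] = 1 := rfl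

@[simp]
theorem blade_cons (a : M) (l : List M) : blade Q (a :: l) = ι Q a * blade Q l :=
  List.prod_cons

theorem involute_blade (l : List M) :
    involute (blade Q l) = (-1 : R) ^ l.length • blade Q l :=
  involute_prod_map_ι l

theorem ι_mul_blade_of_forall_isOrtho {a : M} {l : List M} (h : ∀ b ∈ l, Q.IsOrtho a b) :
    ι Q a * blade Q l = (-1 : R) ^ l.length • (blade Q l * ι Q a) := by
  induction l with
  | nil => simp
  | cons b l ih =>
    obtain ⟨hab, hal⟩ := List.forall_mem_cons.1 h
    rw [blade_cons, ι_mul_ι_mul_of_isOrtho _ hab, ih hal]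
    simp [pow_succ, mul_assoc]

theorem ι_mul_blade_of_mem {a : M} {l : List M} (hl : l.Pairwise Q.IsOrtho) (ha : a ∈ l) :
    ι Q a * blade Q l = (-1 : R) ^ (l.length + 1) • (blade Q l * ι Q a) := by
  induction l with
  | nil => simp at ha
  | cons b l ih =>
    obtain ⟨hbl, hl⟩ := List.pairwise_cons.1 hl
    rcases List.mem_cons.1 ha with rfl | hal
    · rw [blade_cons, mul_assoc, ← mul_smul_comm, ι_mul_blade_of_forall_isOrtho hbl]
      simp [pow_succ]
    · rw [blade_cons, ι_mul_ι_mul_of_isOrtho _ (hbl a hal).symm, ih hl hal]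
      simp [pow_succ, mul_assoc]

theorem reverse_blade {l : List M} (hl : l.Pairwise Q.IsOrtho) :
    reverse (blade Q l) = (-1 : R) ^ l.length.choose 2 • blade Q l := by
  induction l with
  | nil => simp
  | cons a l ih =>
    obtain ⟨hal, hl⟩ := List.pairwise_cons.1 hl
    rw [blade_cons, reverse.map_mul, reverse_ι, ih hl, ι_mul_blade_of_forall_isOrtho hal,
      smul_mul_assoc, smul_smul, ← pow_add, List.length_cons, Nat.choose_succ_succ' _ 1,
      Nat.choose_one_right, add_right_comm, ← two_mul, pow_add, pow_mul]
    simp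

theorem reverse_blade_mul_blade (l : List M) :
    reverse (blade Q l) * blade Q l = algebraMap R _ (l.map Q).prod := by
  induction l with
  | nil => simp
  | cons a l ih =>
    calc reverse (blade Q (a :: l)) * blade Q (a :: l)
      _ = reverse (blade Q l) * (ι Q a * ι Q a) * blade Q l := by
        simp only [blade_cons, reverse.map_mul, reverse_ι, mul_assoc]
      _ = algebraMap R _ (Q a) * (reverse (blade Q l) * blade Q l) := by
        rw [ι_sq_scalar, ← Algebra.commutes, mul_assoc]
      _ = algebraMap R _ ((a :: l).map Q).prod := by simp [ih]

theorem blade_mul_self {l : List M} (hl : l.Pairwise Q.IsOrtho) :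
    blade Q l * blade Q l = algebraMap R _ ((-1) ^ l.length.choose 2 * (l.map Q).prod) := by
  rw [map_mul, ← reverse_blade_mul_blade, reverse_blade hl, ← Algebra.smul_def, smul_mul_assoc,
    smul_smul, ← pow_add, Even.neg_one_pow ⟨_, rfl⟩, one_smul]

theorem blade_mem_center {l : List M} (hl : l.Pairwise Q.IsOrtho)
    (hspan : Submodule.span R {a | a ∈ l} = ⊤) (hodd : Odd l.length) :
    blade Q l ∈ Subalgebra.center R (CliffordAlgebra Q) := by
  refine mem_center_of_forall_ι_mul fun x ↦ ?_
  have hx : x ∈ Submodule.span R {a | a ∈ l} := hspan ▸ Submodule.mem_top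
  induction hx using Submodule.span_induction with
  | mem a ha => rw [ι_mul_blade_of_mem hl ha, hodd.add_one.neg_one_pow, one_smul]
  | zero => simp
  | add a b _ _ ha hb => rw [map_add, add_mul, mul_add, ha, hb]
  | smul r a _ ha => rw [map_smul, smul_mul_assoc, mul_smul_comm, ha]

/-- The span of the blades `e_A` with `A` running over the sublists of a list of vectors, that is,
of the products of some of these vectors taken in the order of the list. -/
def bladeSpan (Q : QuadraticForm R M) (l : List M) : Submodule R (CliffordAlgebra Q) :=
  Submodule.span R (blade Q '' {m | m.Sublist l})

theorem blade_mem_bladeSpan {m l : List M} (h : m.Sublist l) : blade Q m ∈ bladeSpan Q l :=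
  Submodule.subset_span ⟨m, h, rfl⟩

theorem bladeSpan_le_bladeSpan_cons (a : M) (l : List M) :
    bladeSpan Q l ≤ bladeSpan Q (a :: l) :=
  Submodule.span_mono (Set.image_mono fun _ h ↦ List.Sublist.cons a h)

theorem ι_mul_mem_bladeSpan_cons (a : M) {l : List M} {y : CliffordAlgebra Q}
    (hy : y ∈ bladeSpan Q l) : ι Q a * y ∈ bladeSpan Q (a :: l) := by
  induction hy using Submodule.span_induction with
  | mem y hy =>
    obtain ⟨m, hm, rfl⟩ := hy
    rw [← blade_cons]
    exact blade_mem_bladeSpan (hm.cons_cons a)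
  | zero => simp
  | add y z _ _ hy hz => simpa [mul_add] using add_mem hy hz
  | smul r y _ hy => simpa using Submodule.smul_mem _ r hy

theorem ι_mul_blade_mem_bladeSpan {l : List M} (hl : l.Pairwise Q.IsOrtho) {a : M} (ha : a ∈ l)
    {m : List M} (hm : m.Sublist l) : ι Q a * blade Q m ∈ bladeSpan Q l := by
  induction hm with
  | slnil => simp at ha
  | @cons m l b hm ih =>
    obtain ⟨-, hl⟩ := List.pairwise_cons.1 hl
    rcases List.mem_cons.1 ha with rfl | hal
    · exact ι_mul_mem_bladeSpan_cons a (blade_mem_bladeSpan hm)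
    · exact bladeSpan_le_bladeSpan_cons b l (ih hl hal)
  | @cons_cons m l b hm ih =>
    obtain ⟨hbl, hl⟩ := List.pairwise_cons.1 hl
    rw [blade_cons]
    rcases List.mem_cons.1 ha with rfl | hal
    · rw [← mul_assoc, ι_sq_scalar, ← Algebra.smul_def]
      exact Submodule.smul_mem _ _ (blade_mem_bladeSpan (hm.cons a))
    · rw [ι_mul_ι_mul_of_isOrtho _ (hbl a hal).symm]
      exact neg_mem (ι_mul_mem_bladeSpan_cons b (ih hl hal))

theorem ι_mul_mem_bladeSpan {l : List M} (hl : l.Pairwise Q.IsOrtho) {x : M}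
    (hx : x ∈ Submodule.span R {a | a ∈ l}) {y : CliffordAlgebra Q} (hy : y ∈ bladeSpan Q l) :
    ι Q x * y ∈ bladeSpan Q l := by
  induction hx, hy using Submodule.span_induction₂ with
  | mem_mem a y ha hy =>
    obtain ⟨m, hm, rfl⟩ := hy
    exact ι_mul_blade_mem_bladeSpan hl ha hm
  | zero_left => simp
  | zero_right => simp
  | add_left a b y _ _ _ ha hb => simpa [add_mul] using add_mem ha hb
  | add_right a y z _ _ _ hy hz => simpa [mul_add] using add_mem hy hz
  | smul_left r a y _ _ h => simpa using Submodule.smul_mem _ r h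
  | smul_right r a y _ _ h => simpa using Submodule.smul_mem _ r h

theorem bladeSpan_eq_top {l : List M} (hl : l.Pairwise Q.IsOrtho)
    (hspan : Submodule.span R {a | a ∈ l} = ⊤) : bladeSpan Q l = ⊤ := by
  rw [eq_top_iff]
  rintro y -
  induction y using CliffordAlgebra.left_induction with
  | algebraMap r =>
    rw [Algebra.algebraMap_eq_smul_one, ← blade_nil]
    exact Submodule.smul_mem _ r (blade_mem_bladeSpan (List.nil_sublist l))
  | add y z hy hz => exact add_mem hy hz
  | ι_mul y x hy => exact ι_mul_mem_bladeSpan hl (hspan ▸ Submodule.mem_top) hy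

theorem bladeSpan_fg (Q : QuadraticForm R M) (l : List M) : (bladeSpan Q l).FG := by
  refine Submodule.fg_span (Set.Finite.image _ ?_)
  simpa using l.sublists.finite_toSet

variable [Invertible (2 : R)]

variable (R) in
theorem eq_zero_of_neg_eq_self {N : Type*} [AddCommGroup N] [Module R N] {x : N}
    (hx : -x = x) : x = 0 := by
  rw [← (isUnit_of_invertible (2 : R)).smul_eq_zero, two_smul]
  exact neg_eq_iff_add_eq_zero.1 hx

theorem mem_span_setOf_map_eq_self {f : M →ₗ[R] M} {s : Set M}
    (hs : ∀ x ∈ s, f x = x ∨ f x = -x) {y : M} (hy : y ∈ Submodule.span R s) (hfy : f y = y) :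
    y ∈ Submodule.span R {x ∈ s | f x = x} := by
  suffices h : Submodule.span R s ≤
      (Submodule.span R {x ∈ s | f x = x}).comap (LinearMap.id + f) by
    have hyy : y + f y ∈ Submodule.span R {x ∈ s | f x = x} := h hy
    rw [hfy, ← two_smul R] at hyy
    simpa using Submodule.smul_mem _ (⅟2 : R) hyy
  refine Submodule.span_le.2 fun x hx ↦ ?_
  rcases hs x hx with hfx | hfx
  · have hmem : x ∈ Submodule.span R {x ∈ s | f x = x} := Submodule.subset_span ⟨hx, hfx⟩
    simpa [hfx] using add_mem hmem hmem
  · simp [hfx]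

theorem blade_eq_zero_or_length_mod_four_eq_one {l : List M} (hl : l.Pairwise Q.IsOrtho)
    (hrev : reverse (blade Q l) = blade Q l) (hinv : involute (blade Q l) = -blade Q l) :
    blade Q l = 0 ∨ l.length % 4 = 1 := by
  rw [reverse_blade hl] at hrev
  rw [involute_blade] at hinv
  obtain hk | hk | hk : Even l.length ∨ l.length % 4 = 3 ∨ l.length % 4 = 1 := by
    rw [Nat.even_iff]
    omega
  · rw [hk.neg_one_pow, one_smul] at hinv
    exact .inl (eq_zero_of_neg_eq_self R hinv.symm)
  · rw [(odd_choose_two_of_mod_four_eq_three hk).neg_one_pow, neg_one_smul] at hrev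
    exact .inl (eq_zero_of_neg_eq_self R hrev)
  · exact .inr hk

theorem mem_span_blade_length_mod_four_eq_one {l : List M} (hl : l.Pairwise Q.IsOrtho)
    {y : CliffordAlgebra Q} (hy : y ∈ bladeSpan Q l) (hrev : reverse y = y)
    (hinv : involute y = -y) :
    y ∈ Submodule.span R (blade Q '' {m | m.Sublist l ∧ m.length % 4 = 1}) := by
  have hy₁ := mem_span_setOf_map_eq_self (f := reverse) (by
    rintro _ ⟨m, hm, rfl⟩
    rw [reverse_blade (hl.sublist hm)]
    rcases neg_one_pow_eq_or R (m.length.choose 2) with h | h <;> simp [h]) hy hrev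
  have hy₂ := mem_span_setOf_map_eq_self (f := -involute.toLinearMap) (by
    rintro _ ⟨⟨m, -, rfl⟩, -⟩
    rw [LinearMap.neg_apply, AlgHom.toLinearMap_apply, involute_blade]
    rcases neg_one_pow_eq_or R m.length with h | h <;> simp [h]) hy₁ (by simp [hinv])
  refine Submodule.span_le.2 ?_ hy₂
  rintro _ ⟨⟨⟨m, hm, rfl⟩, hrev⟩, hinv⟩
  rcases blade_eq_zero_or_length_mod_four_eq_one (hl.sublist hm) hrev
    (neg_eq_iff_eq_neg.1 hinv) with h₀ | h₁
  · exact h₀ ▸ zero_mem _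
  · exact Submodule.subset_span ⟨m, ⟨hm, h₁⟩, rfl⟩

end CommRing

section Field

variable {K V : Type*} [Field K] [Invertible (2 : K)] [AddCommGroup V] [Module K V]

theorem span_setOf_ne_zero_eq_top {Q : QuadraticForm K V} (hQ : Q ≠ 0) :
    Submodule.span K {x | Q x ≠ 0} = ⊤ := by
  rw [eq_top_iff]
  rintro x -
  obtain ⟨u, hu⟩ := DFunLike.ne_iff.1 hQ
  have hu_mem : u ∈ Submodule.span K {x | Q x ≠ 0} := Submodule.subset_span hu
  by_cases hx : Q x = 0
  · have hsum : Q (x + u) + Q (x - u) = 2 * Q u := by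
      rw [sub_eq_add_neg, QuadraticMap.map_add Q, QuadraticMap.map_add Q,
        QuadraticMap.polar_neg_right, QuadraticMap.map_neg, hx]
      ring
    obtain h | h : Q (x + u) ≠ 0 ∨ Q (x - u) ≠ 0 := by
      by_contra! h
      rw [h.1, h.2, add_zero] at hsum
      exact mul_ne_zero two_ne_zero hu hsum.symm
    · simpa using sub_mem (Submodule.subset_span h) hu_mem
    · simpa using add_mem (Submodule.subset_span h) hu_mem
  · exact Submodule.subset_span hx

variable {Q : QuadraticForm K V}

theorem ι_add_mem_range_or_mem_center {v : V} {ω : CliffordAlgebra Q}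
    (hω : ω ∈ Subalgebra.center K (CliffordAlgebra Q)) {d : K}
    (hωω : ω * ω = algebraMap K _ d) {a : K} (ha : a ≠ 0)
    (hsq : (ι Q v + ω) * (ι Q v + ω) = algebraMap K _ a) :
    ι Q v + ω ∈ LinearMap.range (ι Q) ∨
      ι Q v + ω ∈ Subalgebra.center K (CliffordAlgebra Q) := by
  have hcomm := Subalgebra.mem_center_iff.1 hω (ι Q v)
  obtain ⟨s, hs⟩ : ∃ s : K, s = ⅟2 * (a - Q v - d) := ⟨_, rfl⟩
  have hvω : ι Q v * ω = algebraMap K _ s := by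
    have h : (2 : K) • (ι Q v * ω) = algebraMap K _ (a - Q v - d) := by
      rw [map_sub, map_sub, ← hsq, ← ι_sq_scalar, ← hωω, two_smul]
      simp only [add_mul, mul_add, ← hcomm]
      abel
    rw [hs, map_mul, ← h, ← Algebra.smul_def, smul_smul, invOf_mul_self, one_smul]
  have hvvω : Q v • ω = s • ι Q v := by
    rw [Algebra.smul_def, ← ι_sq_scalar, mul_assoc, hvω, ← Algebra.commutes, Algebra.smul_def]
  have hvωω : d • ι Q v = s • ω := by
    rw [Algebra.smul_def, ← hωω, Algebra.smul_def, ← hvω, mul_assoc, ← hcomm, ← mul_assoc, hcomm]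
  by_cases hv : Q v = 0
  · right
    suffices hv_mem : ι Q v ∈ Subalgebra.center K (CliffordAlgebra Q) from add_mem hv_mem hω
    by_cases hd : d = 0
    · have hs0 : s ≠ 0 := by simpa [hs, hv, hd] using mul_ne_zero (Invertible.ne_zero (⅟(2 : K))) ha
      have : ι Q v = 0 := by simpa [hv, hs0] using hvvω.symm
      exact this ▸ zero_mem _
    · rw [← inv_smul_smul₀ hd (ι Q v), hvωω]
      exact Subalgebra.smul_mem _ (Subalgebra.smul_mem _ hω s) _
  · left
    rw [← inv_smul_smul₀ hv ω, hvvω]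
    exact ⟨v + (Q v)⁻¹ • s • v, by simp⟩

theorem conj_ι_mem_range_of_ne_zero {T : (CliffordAlgebra Q)ˣ} {ω : CliffordAlgebra Q}
    (hω : ω ∈ Subalgebra.center K (CliffordAlgebra Q)) {d : K}
    (hωω : ω * ω = algebraMap K _ d) {x : V} (hx : Q x ≠ 0)
    (hT : T * ι Q x * ↑T⁻¹ ∈ LinearMap.range (ι Q) ⊔ Submodule.span K {ω}) :
    T * ι Q x * ↑T⁻¹ ∈ LinearMap.range (ι Q) := by
  obtain ⟨_, ⟨v, rfl⟩, _, hz, hy⟩ := Submodule.mem_sup.1 hT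
  obtain ⟨c, rfl⟩ := Submodule.mem_span_singleton.1 hz
  have hsq : (T * ι Q x * ↑T⁻¹) * (T * ι Q x * ↑T⁻¹) = algebraMap K _ (Q x) := by
    calc (T * ι Q x * ↑T⁻¹) * (T * ι Q x * ↑T⁻¹)
      _ = T * (ι Q x * ι Q x) * ↑T⁻¹ := by simp only [mul_assoc, T.inv_mul_cancel_left]
      _ = algebraMap K _ (Q x) := by
        rw [ι_sq_scalar, ← Algebra.commutes, mul_assoc, T.mul_inv, mul_one]
  have hcωω : (c • ω) * (c • ω) = algebraMap K _ (c * c * d) := by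
    rw [smul_mul_smul_comm, hωω, map_mul _ (c * c), Algebra.smul_def]
  rw [← hy] at hsq
  rcases ι_add_mem_range_or_mem_center (Subalgebra.smul_mem _ hω c) hcωω hx hsq with h | h
  · exact hy ▸ h
  · rw [hy, Subalgebra.mem_center_iff] at h
    have hfix : T * ι Q x * ↑T⁻¹ = ι Q x := by
      calc T * ι Q x * ↑T⁻¹
        _ = ↑T⁻¹ * (T * (T * ι Q x * ↑T⁻¹)) := by simp
        _ = ι Q x := by rw [h]; simp [mul_assoc]
    exact ⟨x, hfix.symm⟩

variable [FiniteDimensional K V]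

theorem exists_orthogonal_list (Q : QuadraticForm K V) :
    ∃ l : List V, l.length = Module.finrank K V ∧ l.Pairwise Q.IsOrtho ∧
      Submodule.span K {a | a ∈ l} = ⊤ := by
  obtain ⟨e, he⟩ :=
    LinearMap.BilinForm.exists_orthogonal_basis (QuadraticForm.associated_isSymm K Q)
  refine ⟨List.ofFn e, List.length_ofFn, ?_, ?_⟩
  · rw [List.pairwise_ofFn]
    exact fun i j hij ↦ QuadraticMap.associated_isOrtho.1 (he hij.ne)
  · simpa [List.mem_ofFn, Set.range] using e.span_eq

theorem finiteDimensional_cliffordAlgebra (Q : QuadraticForm K V) :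
    FiniteDimensional K (CliffordAlgebra Q) := by
  obtain ⟨l, -, hl, hspan⟩ := exists_orthogonal_list Q
  exact ⟨bladeSpan_eq_top hl hspan ▸ bladeSpan_fg Q l⟩

theorem exists_mem_center_forall_mem_range_sup_span (hV : Module.finrank K V ≤ 5) :
    ∃ ω ∈ Subalgebra.center K (CliffordAlgebra Q), (∃ d, ω * ω = algebraMap K _ d) ∧
      ∀ y, reverse y = y → involute y = -y →
        y ∈ LinearMap.range (ι Q) ⊔ Submodule.span K {ω} := by
  obtain ⟨l, hlen, hl, hspan⟩ := exists_orthogonal_list Q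
  refine ⟨if l.length = 5 then blade Q l else 0, ?_, ?_, fun y hrev hinv ↦ ?_⟩
  · split_ifs with h5
    · exact blade_mem_center hl hspan (h5 ▸ by decide)
    · exact zero_mem _
  · split_ifs with h5
    · exact ⟨_, blade_mul_self hl⟩
    · exact ⟨0, by simp⟩
  · have hy : y ∈ bladeSpan Q l := bladeSpan_eq_top hl hspan ▸ Submodule.mem_top
    refine Submodule.span_le.2 ?_ (mem_span_blade_length_mod_four_eq_one hl hy hrev hinv)
    rintro _ ⟨m, ⟨hm, hmod⟩, rfl⟩
    obtain hm1 | hm5 : m.length = 1 ∨ m.length = 5 := by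
      have := hm.length_le
      omega
    · obtain ⟨a, rfl⟩ := List.length_eq_one_iff.1 hm1
      exact Submodule.mem_sup_left ⟨a, by simp⟩
    · obtain rfl := hm.eq_of_length_le (by omega)
      rw [if_pos hm5]
      exact Submodule.mem_sup_right (Submodule.mem_span_singleton_self _)

theorem conj_ι_mem_range (hV : Module.finrank K V ≤ 5) {T : (CliffordAlgebra Q)ˣ}
    (hT : involute (T : CliffordAlgebra Q) = T ∨ involute (T : CliffordAlgebra Q) = -T)
    {c : K} (hinv : (↑T⁻¹ : CliffordAlgebra Q) = c • reverse (T : CliffordAlgebra Q)) (x : V) :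
    T * ι Q x * ↑T⁻¹ ∈ LinearMap.range (ι Q) := by
  by_cases hQ : Q = 0
  · exact conj_ι_mem_range_of_forall_isOrtho hT fun z ↦ hQ ▸ .all x z
  obtain ⟨ω, hω, ⟨d, hωω⟩, hmem⟩ := exists_mem_center_forall_mem_range_sup_span (Q := Q) hV
  have hx : x ∈ Submodule.span K {x | Q x ≠ 0} := span_setOf_ne_zero_eq_top hQ ▸ Submodule.mem_top
  induction hx using Submodule.span_induction with
  | mem x hx =>
    refine conj_ι_mem_range_of_ne_zero hω hωω hx ?_
    rw [hinv, mul_smul_comm]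
    exact Submodule.smul_mem _ c <| hmem _ (reverse_mul_ι_mul_reverse _ x)
      (involute_mul_ι_mul_reverse hT x)
  | zero => simp
  | add x z _ _ hx hz => simpa [mul_add, add_mul] using add_mem hx hz
  | smul r x _ hx => simpa using Submodule.smul_mem _ r hx

theorem spin_condition_automatic_general (hV : Module.finrank K V ≤ 5) {T : CliffordAlgebra Q}
    (hT : T ∈ evenOdd Q 0 ∨ T ∈ evenOdd Q 1) {c : K} (hc : c ≠ 0)
    (hN : reverse T * T = algebraMap K _ c) :
    IsUnit T ∧ Ring.inverse T = c⁻¹ • reverse T ∧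
      ∀ x : V, ∃ y : V, T * ι Q x * Ring.inverse T = ι Q y := by
  have := finiteDimensional_cliffordAlgebra Q
  have : IsNoetherianRing (CliffordAlgebra Q) := isNoetherian_of_tower K inferInstance
  have hleft : c⁻¹ • reverse T * T = 1 := by
    rw [smul_mul_assoc, hN, Algebra.algebraMap_eq_smul_one, inv_smul_smul₀ hc]
  obtain ⟨T, rfl⟩ : IsUnit T := .of_mul_eq_one_right _ hleft
  have hinv : (↑T⁻¹ : CliffordAlgebra Q) = c⁻¹ • reverse (T : CliffordAlgebra Q) :=
    Units.inv_eq_of_mul_eq_one_left hleft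
  have hinvol := hT.imp involute_eq_of_mem_even involute_eq_of_mem_odd
  rw [Ring.inverse_unit]
  exact ⟨T.isUnit, hinv, fun x ↦ (conj_ι_mem_range hV hinvol hinv x).imp fun _ ↦ .symm⟩

end Field

/-- For `n = p + q ≤ 5`: if `T` is homogeneous (even or odd) and
`reverse(T)·T = ±e`, then `T` is invertible with `T⁻¹ = ±reverse(T)`, and
`T·ι(x)·T⁻¹` lies in the grade-1 subspace `ι(ℝⁿ)` for every `x` — i.e. the
defining condition of the spin groups holds automatically for `n ≤ 5`. -/
theorem spin_condition_automatic (p q : ℕ) (h : p + q ≤ 5) (T : Cl p q)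
    (hT : T ∈ evenOdd (Qpq p q) 0 ∨ T ∈ evenOdd (Qpq p q) 1)
    (hN : reverse T * T = 1 ∨ reverse T * T = -1) :
    IsUnit T ∧
    (Ring.inverse T = reverse T ∨ Ring.inverse T = -reverse T) ∧
    ∀ x : Fin (p + q) → ℝ, ∃ y : Fin (p + q) → ℝ,
      T * ι (Qpq p q) x * Ring.inverse T = ι (Qpq p q) y := by
  have hV : Module.finrank ℝ (Fin (p + q) → ℝ) ≤ 5 := by simpa using h
  rcases hN with hN | hN
  · obtain ⟨hT, hinv, hconj⟩ := spin_condition_automatic_general hV hT (c := 1) (by simp) (by simpa)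
    exact ⟨hT, .inl (by simpa using hinv), hconj⟩
  · obtain ⟨hT, hinv, hconj⟩ :=
      spin_condition_automatic_general hV hT (c := -1) (by simp) (by simpa)
    exact ⟨hT, .inr (by simpa [inv_neg] using hinv), hconj⟩
end
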